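/- arXiv:2406.01828 — 3 statements merged into one kernel-verified Lean document; each statement's English description precedes it below -/
import Mathlib

section
/- The sum over all nontrivial zeros ρ of ζ, counted with multiplicity, of Re(1/ρ) converges absolutely and equals 1 + γ/2 − log(2√π), where γ is the Euler–Mascheroni constant; that is, Σ_ρ m_ρ·Re(1/ρ) = 1 + γ/2 − log(2√π). -/
open Complex Real

/-- The set of nontrivial zeros of the Riemann zeta function. -/
def nontrivialZetaZeros : Set ℂ :=
  {ρ : ℂ | riemannZeta ρ = 0 ∧ 0 < ρ.re ∧ ρ.re < 1}

/-- The order of vanishing of `ζ` at `ρ`: the least `m` such that the `m`-th derivative of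
`ζ` does not vanish at `ρ`. -/
noncomputable def zetaZeroOrder (ρ : ℂ) : ℕ :=
  sInf {m : ℕ | iteratedDeriv m riemannZeta ρ ≠ 0}


open Set Metric Filter Topology

lemma zz_factor_one (F : ℂ → ℂ) (hF : Differentiable ℂ F) (a : ℂ) (h : analyticOrderAt F a ≠ ⊤) :
    ∃ g : ℂ → ℂ, Differentiable ℂ g ∧ (∀ z, F z = (z - a) ^ (analyticOrderNatAt F a) * g z) ∧
      g a ≠ 0 := by
  classical
  obtain ⟨g, hg, hga, hev⟩ := (hF.analyticAt a).analyticOrderAt_ne_top.1 h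
  set m := analyticOrderNatAt F a
  let G : ℂ → ℂ := fun z => if z = a then g a else F z / (z - a) ^ m
  have hGg : G =ᶠ[𝓝 a] g := by
    filter_upwards [hev] with z hz
    by_cases hza : z = a
    · simp [G, hza]
    · have : (z - a) ^ m ≠ 0 := pow_ne_zero _ (sub_ne_zero.2 hza)
      simp only [G, hza, if_false, hz, smul_eq_mul]
      field_simp
  refine ⟨G, fun z => ?_, fun z => ?_, ?_⟩
  · by_cases hza : z = a
    · subst hza
      exact (hGg.differentiableAt_iff).2 hg.differentiableAt
    · have : G =ᶠ[𝓝 z] fun z => F z / (z - a) ^ m := by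
        filter_upwards [isOpen_ne.mem_nhds hza] with w hw
        simp [G, show w ≠ a from hw]
      refine (this.differentiableAt_iff).2 ?_
      refine (hF z).div (by fun_prop) (pow_ne_zero _ (sub_ne_zero.2 hza))
  · by_cases hza : z = a
    · subst hza
      have := hev.self_of_nhds
      simpa [G] using this
    · have : (z - a) ^ m ≠ 0 := pow_ne_zero _ (sub_ne_zero.2 hza)
      simp only [G, hza, if_false]
      field_simp
  · simpa [G] using hga

lemma zz_factor (F : ℂ → ℂ) (hF : Differentiable ℂ F) (h : ∀ a, analyticOrderAt F a ≠ ⊤)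
    (S : Finset ℂ) :
    ∃ g : ℂ → ℂ, Differentiable ℂ g ∧
      (∀ z, F z = (∏ a ∈ S, (z - a) ^ (analyticOrderNatAt F a)) * g z) ∧ ∀ a ∈ S, g a ≠ 0 := by
  classical
  induction S using Finset.induction_on with
  | empty => exact ⟨F, hF, by simp, by simp⟩
  | insert b S hb ih =>
    obtain ⟨g, hg, hFg, hgS⟩ := ih
    have hP : AnalyticAt ℂ (fun z => ∏ a ∈ S, (z - a) ^ (analyticOrderNatAt F a)) b := by
      refine Differentiable.analyticAt ?_ b
      fun_prop
    have hPb : (∏ a ∈ S, (b - a) ^ (analyticOrderNatAt F a)) ≠ 0 := by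
      refine Finset.prod_ne_zero_iff.2 fun a ha => pow_ne_zero _ (sub_ne_zero.2 ?_)
      rintro rfl; exact hb ha
    have hord : analyticOrderAt F b = analyticOrderAt g b := by
      have : F = (fun z => ∏ a ∈ S, (z - a) ^ (analyticOrderNatAt F a)) * g := by
        ext z; exact hFg z
      conv_lhs => rw [this]
      rw [analyticOrderAt_mul hP (hg.analyticAt b), hP.analyticOrderAt_eq_zero.2 hPb, zero_add]
    obtain ⟨k, hk, hgk, hkb⟩ := zz_factor_one g hg b (hord ▸ h b)
    have hm : analyticOrderNatAt g b = analyticOrderNatAt F b := by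
      simp [analyticOrderNatAt, hord]
    rw [hm] at hgk
    refine ⟨k, hk, fun z => ?_, fun a ha => ?_⟩
    · rw [Finset.prod_insert hb, hFg z, hgk z]; ring
    · rcases Finset.mem_insert.1 ha with rfl | ha
      · exact hkb
      · intro h0
        exact hgS a ha (by rw [hgk a, h0, mul_zero])

/-- Logarithm with Borel-Caratheodory bound on second difference. -/
lemma zz_log_bound (g : ℂ → ℂ) (hg : Differentiable ℂ g) (R M : ℝ) (hR : 8 ≤ R) (hM : 0 < M)
    (hg0 : g 0 = 1) (hne : ∀ z ∈ ball (0 : ℂ) R, g z ≠ 0)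
    (hb : ∀ z ∈ ball (0 : ℂ) R, ‖g z‖ ≤ Real.exp M) :
    ‖logDeriv g 0 - logDeriv g 1‖ ≤ 64 * M / R ^ 2 := by
  have hRpos : 0 < R := by linarith
  have hL : DifferentiableOn ℂ (logDeriv g) (ball 0 R) := by
    intro z hz
    have : DifferentiableAt ℂ (fun z => deriv g z / g z) z :=
      ((hg.analyticAt z).deriv.differentiableAt).div (hg z) (hne z hz)
    exact this.differentiableWithinAt
  obtain ⟨h, hh0, hh⟩ := hL.isExactOn_ball.with_val_at 0 0
  have hhd : DifferentiableOn ℂ h (ball 0 R) :=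
    fun z hz => (hh z hz).differentiableAt.differentiableWithinAt
  have hexp : ∀ z ∈ ball (0 : ℂ) R, g z = Complex.exp (h z) := by
    intro z hz
    have hd : ∀ w ∈ ball (0 : ℂ) R, HasDerivAt (fun w => g w * Complex.exp (-h w)) 0 w := by
      intro w hw
      have h1 := (hg w).hasDerivAt.mul ((hh w hw).neg.cexp)
      have hnw := hne w hw
      have h2 : deriv g w * Complex.exp ((-h) w) +
          g w * (Complex.exp ((-h) w) * -logDeriv g w) = 0 := by
        rw [logDeriv_apply]
        field_simp
        ring
      rw [h2] at h1
      exact h1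
    have := (convex_ball (0 : ℂ) R).is_const_of_fderivWithin_eq_zero (𝕜 := ℂ)
      (f := fun w => g w * Complex.exp (-h w))
      (fun w hw => (hd w hw).differentiableAt.differentiableWithinAt)
      (fun w hw => by
        rw [fderivWithin_of_isOpen isOpen_ball hw]
        ext
        simp [(hd w hw).deriv]) hz (mem_ball_self hRpos)
    simp only [hh0, hg0, neg_zero, Complex.exp_zero, mul_one] at this
    rw [Complex.exp_neg] at this
    field_simp at this
    exact this
  have hre : MapsTo h (ball 0 R) {z | z.re ≤ M} := by
    intro z hz
    have := hb z hz
    rw [hexp z hz, Complex.norm_exp] at this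
    exact Real.exp_le_exp.1 this
  have hbc : ∀ z : ℂ, ‖z‖ ≤ R / 2 → ‖h z‖ ≤ 2 * M := by
    intro z hz
    have hzb : z ∈ ball (0 : ℂ) R := by simp; linarith
    refine (Complex.borelCaratheodory_zero hM hhd hre hRpos hzb hh0).trans ?_
    rw [div_le_iff₀ (by linarith)]
    nlinarith
  have hderiv : ∀ z ∈ ball (0 : ℂ) R, deriv h z = logDeriv g z := fun z hz => (hh z hz).deriv
  have hb1 : ∀ z ∈ ball (0 : ℂ) (R / 4), ‖logDeriv g z‖ ≤ 8 * M / R := by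
    intro z hz
    have hz' : ‖z‖ < R / 4 := by simpa using hz
    rw [← hderiv z (by simp; linarith)]
    have hsub : ∀ w, dist w z ≤ R / 4 → ‖w‖ ≤ R / 2 := by
      intro w hw
      have := norm_add_le (w - z) z
      rw [sub_add_cancel, ← dist_eq_norm] at this
      linarith
    have := Complex.norm_deriv_le_of_forall_mem_sphere_norm_le (c := z) (R := R / 4) (f := h)
      (C := 2 * M) (by linarith)
      (DifferentiableOn.diffContOnCl (by
        rw [closure_ball _ (by linarith : R / 4 ≠ 0)]
        intro w hw
        have := hsub w hw
        exact (hhd w (by simp; linarith)).mono_of_mem_nhdsWithin (mem_nhdsWithin_of_mem_nhds (isOpen_ball.mem_nhds (by simp; linarith)))))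
      (fun w hw => hbc w (hsub w (le_of_eq hw)))
    refine this.trans (le_of_eq ?_)
    field_simp
    ring
  have := Complex.dist_le_div_mul_dist_of_mapsTo_ball (f := logDeriv g) (c := 0) (R₁ := R / 4)
    (R₂ := 16 * M / R) (z := 1) (hL.mono (ball_subset_ball (by linarith)))
    (fun w hw => by
      rw [mem_closedBall, dist_eq_norm]
      refine (norm_sub_le _ _).trans ?_
      have h1 := hb1 w hw
      have h2 := hb1 0 (mem_ball_self (by linarith))
      calc _ ≤ 8 * M / R + 8 * M / R := add_le_add h1 h2
        _ = _ := by ring) (by simp; linarith)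
  rw [dist_comm, dist_eq_norm] at this
  refine this.trans (le_of_eq ?_)
  simp
  field_simp
  ring

lemma zz_key (F : ℂ → ℂ) (hF : Differentiable ℂ F) (hF0 : F 0 = 1) (hF1 : F 1 ≠ 0)
    (R M : ℝ) (hR : 8 ≤ R) (hM : 0 < M)
    (hb : ∀ z, ‖z‖ = 2 * R → ‖F z‖ ≤ Real.exp M) (S : Finset ℂ)
    (hS : ∀ z, z ∈ S ↔ F z = 0 ∧ ‖z‖ ≤ R) :
    ‖(logDeriv F 0 - logDeriv F 1) -
      ∑ a ∈ S, (analyticOrderNatAt F a : ℂ) * (1 / (0 - a) - 1 / (1 - a))‖ ≤ 64 * M / R ^ 2 := by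
  have htop : ∀ a, analyticOrderAt F a ≠ ⊤ := by
    intro a ha
    have : AnalyticOnNhd ℂ F univ := fun z _ => hF.analyticAt z
    have h0 := this.eqOn_zero_of_preconnected_of_eventuallyEq_zero isPreconnected_univ
      (mem_univ a) (analyticOrderAt_eq_top.1 ha) (mem_univ 0)
    simp [hF0] at h0
  obtain ⟨g, hg, hFg, hgS⟩ := zz_factor F hF htop S
  have hS0 : ∀ a ∈ S, a ≠ 0 := by
    rintro a ha rfl
    simp [hS, hF0] at ha
  have hS1 : ∀ a ∈ S, a ≠ 1 := by
    rintro a ha rfl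
    simp [hS, hF1] at ha
  set m := analyticOrderNatAt F
  set c : ℂ := ∏ a ∈ S, (-a) ^ m a with hc
  have hc0 : c ≠ 0 := Finset.prod_ne_zero_iff.2 fun a ha => pow_ne_zero _ (neg_ne_zero.2 (hS0 a ha))
  set k : ℂ → ℂ := fun z => c * g z with hk
  have hkd : Differentiable ℂ k := by fun_prop
  have hFk : ∀ z, F z = (∏ a ∈ S, (1 - z / a) ^ m a) * k z := by
    intro z
    rw [hFg z, hk]
    simp only
    rw [hc, ← mul_assoc, ← Finset.prod_mul_distrib]
    congr 1
    refine Finset.prod_congr rfl fun a ha => ?_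
    rw [← mul_pow]
    congr 1
    field_simp [hS0 a ha]
    ring
  have hk0 : k 0 = 1 := by
    have := hFk 0
    simpa [hF0] using this.symm
  have hkne : ∀ z ∈ ball (0 : ℂ) R, k z ≠ 0 := by
    intro z hz h0
    have hz' : ‖z‖ < R := by simpa using hz
    have hzS : z ∈ S := (hS z).2 ⟨by rw [hFk, h0, mul_zero], hz'.le⟩
    exact mul_ne_zero hc0 (hgS z hzS) h0
  have hkb : ∀ z, ‖z‖ = 2 * R → ‖k z‖ ≤ Real.exp M := by
    intro z hz
    have h1 : 1 ≤ ‖∏ a ∈ S, (1 - z / a) ^ m a‖ := by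
      rw [norm_prod]
      have : ∀ a ∈ S, (1 : ℝ) ≤ ‖(1 - z / a) ^ m a‖ := by
        intro a ha
        rw [norm_pow]
        refine one_le_pow₀ ?_
        have h2 : 2 ≤ ‖z / a‖ := by
          rw [norm_div, le_div_iff₀ (norm_pos_iff.2 (hS0 a ha)), hz]
          linarith [((hS a).1 ha).2]
        have := norm_sub_norm_le (z / a) 1
        rw [norm_one, norm_sub_rev] at this
        linarith
      calc (1 : ℝ) = ∏ a ∈ S, 1 := by simp
        _ ≤ _ := Finset.prod_le_prod (fun _ _ => zero_le_one) this
    have h2 := hb z hz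
    rw [hFk z, norm_mul] at h2
    nlinarith [norm_nonneg (k z)]
  have hkb' : ∀ z ∈ ball (0 : ℂ) R, ‖k z‖ ≤ Real.exp M := by
    intro z hz
    have hz' : ‖z‖ < R := by simpa using hz
    refine Complex.norm_le_of_forall_mem_frontier_norm_le (U := ball 0 (2 * R)) isBounded_ball
      hkd.diffContOnCl ?_ (subset_closure (by simp; linarith))
    intro w hw
    rw [frontier_ball _ (by linarith : 2 * R ≠ 0)] at hw
    exact hkb w (by simpa using hw)
  have hlog : ∀ z ∈ ball (0 : ℂ) R, (∀ a ∈ S, a ≠ z) →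
      logDeriv F z = (∑ a ∈ S, (m a : ℂ) * (1 / (z - a))) + logDeriv k z := by
    intro z hz hzS
    have hne : ∀ a ∈ S, (1 - z / a) ≠ 0 := by
      intro a ha h0
      have ha0 := hS0 a ha
      field_simp at h0
      rw [mul_zero] at h0
      exact hzS a ha (sub_eq_zero.1 h0)
    have hFk' : F = fun z => (∏ a ∈ S, (1 - z / a) ^ m a) * k z := funext hFk
    have hpd : DifferentiableAt ℂ (fun z => ∏ a ∈ S, (1 - z / a) ^ m a) z := by
      fun_prop
    conv_lhs => rw [hFk']
    rw [logDeriv_mul z (Finset.prod_ne_zero_iff.2 fun a ha => pow_ne_zero _ (hne a ha))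
      (hkne z hz) hpd (hkd z), logDeriv_prod (f := fun a z => (1 - z / a) ^ m a) (fun a ha => pow_ne_zero _ (hne a ha))
      (fun a ha => by fun_prop)]
    congr 1
    refine Finset.sum_congr rfl fun a ha => ?_
    rw [logDeriv_fun_pow (by fun_prop)]
    congr 1
    have hd : HasDerivAt (fun z : ℂ => 1 - z / a) (-(1 / a)) z := by
      simpa using ((hasDerivAt_id z).div_const a).const_sub 1
    rw [logDeriv_apply, hd.deriv]
    have := hne a ha
    have ha0 := hS0 a ha
    have hza : z - a ≠ 0 := sub_ne_zero.2 (hzS a ha).symm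
    have haz : a - z ≠ 0 := sub_ne_zero.2 (hzS a ha)
    field_simp
    ring
  have hfin := zz_log_bound k hkd R M hR hM hk0 hkne hkb'
  have e : (logDeriv F 0 - logDeriv F 1) -
      ∑ a ∈ S, (m a : ℂ) * (1 / (0 - a) - 1 / (1 - a)) = logDeriv k 0 - logDeriv k 1 := by
    rw [hlog 0 (by simp; linarith) hS0, hlog 1 (by simp; linarith) hS1]
    simp only [mul_sub, Finset.sum_sub_distrib]
    ring
  rw [e]
  exact hfin

/-- The completed xi function (twice Riemann's xi). -/
noncomputable def zzXi (s : ℂ) : ℂ := 1 + s * (s - 1) * completedRiemannZeta₀ s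

lemma zz_norm_Gamma_le {s : ℂ} (hs : 0 < s.re) : ‖Complex.Gamma s‖ ≤ Real.Gamma s.re := by
  rw [Complex.Gamma_eq_integral hs, Real.Gamma_eq_integral hs, Complex.GammaIntegral]
  refine (MeasureTheory.norm_integral_le_integral_norm _).trans (le_of_eq ?_)
  refine MeasureTheory.setIntegral_congr_fun measurableSet_Ioi fun x hx => ?_
  have hx' : 0 < x := hx
  simp only [norm_mul]
  rw [Complex.norm_cpow_eq_rpow_re_of_pos hx']
  rw [Complex.norm_real, Real.norm_of_nonneg (Real.exp_pos _).le]
  simp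

lemma zz_Gamma_le {x : ℝ} (hx : 1 ≤ x) :
    Real.Gamma x ≤ Real.exp ((x + 1) * Real.log (x + 1)) := by
  have h1 : Real.Gamma x ≤ Real.Gamma (x + 1) := by
    rw [Real.Gamma_add_one (by linarith)]
    have := Real.Gamma_pos_of_pos (show 0 < x by linarith)
    nlinarith
  have h2 : Real.Gamma (x + 1) ≤ Real.Gamma (⌈x⌉₊ + 1) :=
    Real.Gamma_strictMonoOn_Ici.monotoneOn (by simp; linarith)
      (by simp; linarith [Nat.le_ceil x]) (by linarith [Nat.le_ceil x])
  rw [Real.Gamma_nat_eq_factorial] at h2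
  have h3 : (Nat.factorial ⌈x⌉₊ : ℝ) ≤ (⌈x⌉₊ : ℝ) ^ ⌈x⌉₊ := by
    exact_mod_cast Nat.factorial_le_pow _
  have hc : (⌈x⌉₊ : ℝ) ≤ x + 1 := (Nat.ceil_lt_add_one (by linarith)).le
  have h4 : (⌈x⌉₊ : ℝ) ^ ⌈x⌉₊ ≤ (x + 1) ^ (x + 1) := by
    calc (⌈x⌉₊ : ℝ) ^ ⌈x⌉₊ ≤ (x + 1) ^ ⌈x⌉₊ := by gcongr
      _ = (x + 1) ^ (⌈x⌉₊ : ℝ) := (Real.rpow_natCast _ _).symm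
      _ ≤ _ := Real.rpow_le_rpow_of_exponent_le (by linarith) hc
  rw [Real.rpow_def_of_pos (by linarith), mul_comm] at h4
  linarith

lemma zz_zeta_bound : ∃ Z : ℝ, ∀ s : ℂ, 2 ≤ s.re → ‖riemannZeta s‖ ≤ Z := by
  have hsum : Summable (fun n : ℕ => 1 / ((n : ℝ) + 1) ^ 2) := by
    have := (summable_nat_add_iff 1).2 (Real.summable_one_div_nat_pow.2 (one_lt_two))
    simpa using this
  refine ⟨∑' n : ℕ, 1 / ((n : ℝ) + 1) ^ 2, fun s hs => ?_⟩
  rw [zeta_eq_tsum_one_div_nat_add_one_cpow (by linarith)]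
  refine tsum_of_norm_bounded hsum.hasSum fun n => ?_
  have : (0 : ℝ) < (n : ℝ) + 1 := by positivity
  have e : ((n : ℂ) + 1) = (((n : ℝ) + 1 : ℝ) : ℂ) := by push_cast; rfl
  rw [norm_div, norm_one, e, Complex.norm_cpow_eq_rpow_re_of_pos this]
  refine one_div_le_one_div_of_le (by positivity) ?_
  rw [← Real.rpow_natCast]
  exact Real.rpow_le_rpow_of_exponent_le (by linarith [(Nat.cast_nonneg n : (0:ℝ) ≤ n)]) (by simpa using hs)

lemma zz_strip : ∃ A : ℝ, ∀ s : ℂ, 0 ≤ s.re → s.re ≤ 2 → ‖completedRiemannZeta₀ s‖ ≤ A := by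
  set P := HurwitzZeta.hurwitzEvenFEPair 0 with hP
  have hconv : ∀ s, MellinConvergent P.f_modif s := fun s =>
    (P.isStrongFEPair_toStrongFEPair.hasMellin s).1
  have hi : ∀ σ : ℝ, MeasureTheory.IntegrableOn (fun t : ℝ => t ^ (σ - 1) * ‖P.f_modif t‖) (Ioi 0) := by
    intro σ
    have := (hconv σ).norm
    refine MeasureTheory.IntegrableOn.congr_fun this (fun t ht => ?_) measurableSet_Ioi
    rw [norm_smul, Complex.norm_cpow_eq_rpow_re_of_pos ht]
    simp
  refine ⟨(∫ t in Ioi (0 : ℝ), (t ^ ((0:ℝ) - 1) * ‖P.f_modif t‖ + t ^ ((1:ℝ) - 1) * ‖P.f_modif t‖)) / 2,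
    fun s h0 h2 => ?_⟩
  have e : completedRiemannZeta₀ s = mellin P.f_modif (s / 2) / 2 := rfl
  rw [e, norm_div, Complex.norm_ofNat]
  gcongr
  rw [mellin]
  refine MeasureTheory.norm_integral_le_of_norm_le ((hi 0).add (hi 1)) ?_
  refine (MeasureTheory.ae_restrict_mem measurableSet_Ioi).mono fun t ht => ?_
  have ht' : 0 < t := ht
  have hre : (s / 2 - 1).re = s.re / 2 - 1 := by simp
  rw [norm_smul, Complex.norm_cpow_eq_rpow_re_of_pos ht, hre, ← add_mul]
  gcongr
  have p0 := Real.rpow_pos_of_pos ht' ((0:ℝ) - 1)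
  have p1 := Real.rpow_pos_of_pos ht' ((1:ℝ) - 1)
  rcases le_total t 1 with h | h
  · have := Real.rpow_le_rpow_of_exponent_ge ht' h (show (0:ℝ) - 1 ≤ s.re / 2 - 1 by linarith)
    exact this.trans (le_add_of_nonneg_right p1.le)
  · have := Real.rpow_le_rpow_of_exponent_le h (show s.re / 2 - 1 ≤ (1:ℝ) - 1 by linarith)
    exact this.trans (le_add_of_nonneg_left p0.le)

lemma zz_lam_bound : ∃ B : ℝ, 0 < B ∧ ∀ s : ℂ, ∀ r : ℝ, ‖s‖ ≤ r →
    ‖completedRiemannZeta₀ s‖ ≤ B * Real.exp ((r + 2) * Real.log (r + 2)) := by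
  obtain ⟨A, hA⟩ := zz_strip
  obtain ⟨Z, hZ⟩ := zz_zeta_bound
  have hA0 : 0 ≤ A := (norm_nonneg _).trans (hA 1 (by simp) (by simp))
  have hZ0 : 0 ≤ Z := (norm_nonneg _).trans (hZ 2 (by simp))
  have hone : ∀ r : ℝ, 0 ≤ r → 1 ≤ Real.exp ((r + 1) * Real.log (r + 1)) := by
    intro r hr
    rw [Real.one_le_exp_iff]
    exact mul_nonneg (by linarith) (Real.log_nonneg (by linarith))
  have main : ∀ s : ℂ, 0 ≤ s.re → ∀ r : ℝ, ‖s‖ ≤ r →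
      ‖completedRiemannZeta₀ s‖ ≤ (A + Z + 2) * Real.exp ((r + 1) * Real.log (r + 1)) := by
    intro s hs r hr
    have hr0 : 0 ≤ r := (norm_nonneg _).trans hr
    have h1 := hone r hr0
    set E := Real.exp ((r + 1) * Real.log (r + 1))
    rcases le_total s.re 2 with h2 | h2
    · have := hA s hs h2
      nlinarith
    · have hsne : s ≠ 0 := by rintro rfl; simp at h2; linarith
      have hre : s.re ≤ ‖s‖ := Complex.re_le_norm s
      have hL : ‖completedRiemannZeta s‖ ≤ Z * E := by
        have hG : Complex.Gammaℝ s ≠ 0 := Complex.Gammaℝ_ne_zero_of_re_pos (by linarith)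
        have : completedRiemannZeta s = Complex.Gammaℝ s * riemannZeta s := by
          rw [riemannZeta_def_of_ne_zero hsne]; field_simp
        rw [this, norm_mul, mul_comm]
        have hGn : ‖Complex.Gammaℝ s‖ ≤ E := by
          rw [Complex.Gammaℝ_def, norm_mul, Complex.norm_cpow_eq_rpow_re_of_pos Real.pi_pos]
          have h3 : Real.pi ^ (-s / 2).re ≤ 1 :=
            Real.rpow_le_one_of_one_le_of_nonpos (by linarith [Real.pi_gt_three])
              (by simp; linarith)
          have hre2 : (s / 2).re = s.re / 2 := by simp
          have h4 := zz_norm_Gamma_le (s := s / 2) (by rw [hre2]; linarith)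
          rw [hre2] at h4
          have h5 := zz_Gamma_le (x := s.re / 2) (by linarith)
          have h6 : Real.exp ((s.re / 2 + 1) * Real.log (s.re / 2 + 1)) ≤ E := by
            refine Real.exp_le_exp.2 ?_
            have : s.re / 2 + 1 ≤ r + 1 := by linarith
            have := Real.log_le_log (by linarith) this
            have := Real.log_nonneg (show (1:ℝ) ≤ s.re / 2 + 1 by linarith)
            gcongr
          calc _ ≤ 1 * ‖Complex.Gamma (s / 2)‖ := by gcongr
            _ ≤ E := by linarith
        exact mul_le_mul (hZ s h2) hGn (norm_nonneg _) hZ0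
      have e : completedRiemannZeta₀ s = completedRiemannZeta s + 1 / s + 1 / (1 - s) := by
        rw [completedRiemannZeta_eq]; ring
      rw [e]
      have h7 : ‖1 / s‖ ≤ 1 := by
        rw [norm_div, norm_one]
        exact (div_le_one (by linarith)).2 (by linarith)
      have h8 : ‖1 / (1 - s)‖ ≤ 1 := by
        rw [norm_div, norm_one]
        have : 1 ≤ ‖1 - s‖ := by
          rw [norm_sub_rev]
          have := Complex.re_le_norm (s - 1)
          simp at this
          linarith
        exact (div_le_one (by linarith)).2 this
      have := norm_add_le (completedRiemannZeta s + 1 / s) (1 / (1 - s))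
      have := norm_add_le (completedRiemannZeta s) (1 / s)
      nlinarith
  refine ⟨A + Z + 2, by linarith, fun s r hr => ?_⟩
  have hr0 : 0 ≤ r := (norm_nonneg _).trans hr
  rcases le_total 0 s.re with h | h
  · refine (main s h (r + 1) (by linarith)).trans (le_of_eq ?_)
    ring_nf
  · rw [← completedRiemannZeta₀_one_sub]
    refine (main (1 - s) (by simp; linarith) (r + 1) ?_).trans (le_of_eq ?_)
    · have := norm_sub_le 1 s
      rw [norm_one] at this
      linarith
    · ring_nf

lemma zz_xi_bound : ∃ K : ℝ, 0 < K ∧ ∀ R : ℝ, 8 ≤ R → ∀ s : ℂ, ‖s‖ = 2 * R →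
    ‖zzXi s‖ ≤ Real.exp (K + 24 * R * Real.sqrt R) := by
  obtain ⟨B, hB, hb⟩ := zz_lam_bound
  refine ⟨Real.log (B + 1), Real.log_pos (by linarith), fun R hR s hs => ?_⟩
  have h1 := hb s (2 * R) hs.le
  have hX : 0 < 2 * R + 2 := by linarith
  have hE : 1 ≤ Real.exp ((2 * R + 2) * Real.log (2 * R + 2)) := by
    rw [Real.one_le_exp_iff]
    exact mul_nonneg (by linarith) (Real.log_nonneg (by linarith))
  have hs1 : ‖s - 1‖ ≤ 2 * R + 1 := by
    have := norm_sub_le s 1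
    rw [norm_one] at this
    linarith
  have h2 : ‖zzXi s‖ ≤ 1 + 2 * R * (2 * R + 1) * (B * Real.exp ((2 * R + 2) * Real.log (2 * R + 2))) := by
    refine (norm_add_le _ _).trans ?_
    rw [norm_one, norm_mul, norm_mul, hs]
    gcongr
  have h3 : ‖zzXi s‖ ≤ (B + 1) * ((2 * R + 2) ^ 2 * Real.exp ((2 * R + 2) * Real.log (2 * R + 2))) := by
    refine h2.trans ?_
    set E := Real.exp ((2 * R + 2) * Real.log (2 * R + 2))
    have h4 : 1 ≤ (2 * R + 2) ^ 2 * E := by nlinarith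
    have h5 : 2 * R * (2 * R + 1) * (B * E) ≤ B * ((2 * R + 2) ^ 2 * E) := by
      have : 2 * R * (2 * R + 1) ≤ (2 * R + 2) ^ 2 := by nlinarith
      have hBE : 0 ≤ B * E := by positivity
      nlinarith
    linarith
  refine h3.trans ?_
  have hlogX : Real.log (2 * R + 2) ≤ 4 * Real.sqrt R - 0 := by
    have h6 := Real.log_le_rpow_div (x := 2 * R + 2) (ε := 1 / 2) hX.le (by norm_num)
    rw [← Real.sqrt_eq_rpow] at h6
    have h7 : Real.sqrt (2 * R + 2) ≤ 2 * Real.sqrt R := by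
      rw [Real.sqrt_le_left (by positivity), mul_pow, Real.sq_sqrt (by linarith)]
      linarith
    linarith
  have e : (B + 1) * ((2 * R + 2) ^ 2 * Real.exp ((2 * R + 2) * Real.log (2 * R + 2)))
      = Real.exp (Real.log (B + 1) + (2 * R + 4) * Real.log (2 * R + 2)) := by
    rw [Real.exp_add, Real.exp_log (by linarith),
      show (2 * R + 4) * Real.log (2 * R + 2) = 2 * Real.log (2 * R + 2) +
        (2 * R + 2) * Real.log (2 * R + 2) by ring, Real.exp_add]
    congr 2
    rw [two_mul (Real.log _), Real.exp_add, Real.exp_log hX, sq]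
  rw [e]
  refine Real.exp_le_exp.2 ?_
  have hl0 : 0 ≤ Real.log (2 * R + 2) := Real.log_nonneg (by linarith)
  have hs0 := Real.sqrt_nonneg R
  have : (2 * R + 4) * Real.log (2 * R + 2) ≤ (6 * R) * (4 * Real.sqrt R) := by
    refine mul_le_mul (by linarith) (by linarith) hl0 (by linarith)
  linarith

lemma zzXi_diff : Differentiable ℂ zzXi := by
  have := differentiable_completedZeta₀
  unfold zzXi
  fun_prop

lemma zzXi_one_sub (s : ℂ) : zzXi (1 - s) = zzXi s := by
  simp only [zzXi, completedRiemannZeta₀_one_sub]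
  ring

lemma zzXi_zero : zzXi 0 = 1 := by simp [zzXi]

lemma zzXi_one : zzXi 1 = 1 := by simp [zzXi]

lemma zzXi_hasDeriv (s : ℂ) : HasDerivAt zzXi
    ((1 * (s - 1) + s * 1) * completedRiemannZeta₀ s
      + s * (s - 1) * deriv completedRiemannZeta₀ s) s := by
  have h1 : HasDerivAt (fun s : ℂ => s * (s - 1)) (1 * (s - 1) + s * 1) s :=
    (hasDerivAt_id s).mul ((hasDerivAt_id s).sub_const 1)
  exact (h1.mul (differentiable_completedZeta₀ s).hasDerivAt).const_add 1

lemma zzXi_logDeriv : logDeriv zzXi 0 - logDeriv zzXi 1 = -(2 * completedRiemannZeta₀ 1) := by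
  rw [logDeriv_apply, logDeriv_apply, (zzXi_hasDeriv 0).deriv, (zzXi_hasDeriv 1).deriv, zzXi_zero,
    zzXi_one]
  have : completedRiemannZeta₀ 0 = completedRiemannZeta₀ 1 := by
    rw [← completedRiemannZeta₀_one_sub]; simp
  rw [this]
  ring

lemma zzXi_eq {s : ℂ} (h0 : 0 < s.re) (h1 : s ≠ 1) :
    zzXi s = s * (s - 1) * Complex.Gammaℝ s * riemannZeta s := by
  have hsne : s ≠ 0 := by rintro rfl; simp at h0
  have hG : Complex.Gammaℝ s ≠ 0 := Complex.Gammaℝ_ne_zero_of_re_pos h0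
  have h1' : 1 - s ≠ 0 := sub_ne_zero.2 (Ne.symm h1)
  rw [riemannZeta_def_of_ne_zero hsne, completedRiemannZeta_eq, zzXi]
  field_simp
  ring

lemma zzXi_ne_zero_of_one_le {s : ℂ} (h : 1 ≤ s.re) : zzXi s ≠ 0 := by
  by_cases h1 : s = 1
  · rw [h1, zzXi_one]; exact one_ne_zero
  · rw [zzXi_eq (by linarith) h1]
    have hsne : s ≠ 0 := by rintro rfl; simp at h; linarith
    exact mul_ne_zero (mul_ne_zero (mul_ne_zero hsne (sub_ne_zero.2 h1))
      (Complex.Gammaℝ_ne_zero_of_re_pos (by linarith))) (riemannZeta_ne_zero_of_one_le_re h)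

lemma zzXi_zero_iff (s : ℂ) : zzXi s = 0 ↔ s ∈ nontrivialZetaZeros := by
  constructor
  · intro h
    have h1 : s.re < 1 := by
      by_contra hc
      exact zzXi_ne_zero_of_one_le (not_lt.1 hc) h
    have h0 : 0 < s.re := by
      by_contra hc
      refine zzXi_ne_zero_of_one_le (s := 1 - s) ?_ (by rw [zzXi_one_sub, h])
      simp; linarith
    have hs1 : s ≠ 1 := by rintro rfl; simp at h1
    have hsne : s ≠ 0 := by rintro rfl; simp at h0
    rw [zzXi_eq h0 hs1] at h
    refine ⟨?_, h0, h1⟩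
    exact (mul_eq_zero.1 h).resolve_left (mul_ne_zero (mul_ne_zero hsne (sub_ne_zero.2 hs1))
      (Complex.Gammaℝ_ne_zero_of_re_pos h0))
  · rintro ⟨h, h0, h1⟩
    have hs1 : s ≠ 1 := by rintro rfl; simp at h1
    rw [zzXi_eq h0 hs1, h, mul_zero]

lemma zzXi_order_ne_top (a : ℂ) : analyticOrderAt zzXi a ≠ ⊤ := by
  intro ha
  have : AnalyticOnNhd ℂ zzXi univ := fun z _ => zzXi_diff.analyticAt z
  have h0 := this.eqOn_zero_of_preconnected_of_eventuallyEq_zero isPreconnected_univ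
    (mem_univ a) (analyticOrderAt_eq_top.1 ha) (mem_univ 0)
  simp [zzXi_zero] at h0

lemma zzXi_order {ρ : ℂ} (h : ρ ∈ nontrivialZetaZeros) :
    zetaZeroOrder ρ = analyticOrderNatAt zzXi ρ := by
  obtain ⟨hz, h0, h1⟩ := h
  have hρ1 : ρ ≠ 1 := by rintro rfl; simp at h1
  have hρ0 : ρ ≠ 0 := by rintro rfl; simp at h0
  have hG : Complex.Gammaℝ ρ ≠ 0 := Complex.Gammaℝ_ne_zero_of_re_pos h0
  have hGa : AnalyticAt ℂ Complex.Gammaℝ ρ := by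
    have := (Complex.differentiable_Gammaℝ_inv.analyticAt ρ).inv (inv_ne_zero hG)
    refine this.congr (Eventually.of_forall fun s => ?_)
    simp
  have hpa : AnalyticAt ℂ (fun s => s * (s - 1) * Complex.Gammaℝ s) ρ := by fun_prop
  have hζ : AnalyticAt ℂ riemannZeta ρ :=
    analyticOn_riemannZeta ρ (by simpa using hρ1)
  have hev : zzXi =ᶠ[𝓝 ρ] (fun s => s * (s - 1) * Complex.Gammaℝ s) * riemannZeta := by
    filter_upwards [isOpen_ne.mem_nhds hρ1,
      (isOpen_lt continuous_const Complex.continuous_re).mem_nhds h0] with s hs1 hs0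
    exact zzXi_eq hs0 hs1
  have hord : analyticOrderAt zzXi ρ = analyticOrderAt riemannZeta ρ := by
    rw [analyticOrderAt_congr hev, analyticOrderAt_mul hpa hζ,
      hpa.analyticOrderAt_eq_zero.2 (mul_ne_zero (mul_ne_zero hρ0 (sub_ne_zero.2 hρ1)) hG), zero_add]
  have hn : analyticOrderAt riemannZeta ρ = (analyticOrderNatAt zzXi ρ : ℕ) := by
    rw [← hord, Nat.cast_analyticOrderNatAt (zzXi_order_ne_top ρ)]
  obtain ⟨hlt, hne⟩ := (analyticOrderAt_eq_nat_iff_iteratedDeriv_eq_zero hζ).1 hn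
  refine le_antisymm (Nat.sInf_le hne) ?_
  refine le_csInf ⟨_, hne⟩ fun m hm => ?_
  by_contra hc
  exact hm (hlt m (not_le.1 hc))

lemma zzXi_order_symm (ρ : ℂ) : analyticOrderNatAt zzXi (1 - ρ) = analyticOrderNatAt zzXi ρ := by
  have hd : HasDerivAt (fun s : ℂ => 1 - s) (-1) ρ := (hasDerivAt_id ρ).const_sub 1
  have := analyticOrderAt_comp_of_deriv_ne_zero (f := zzXi) (g := fun s : ℂ => 1 - s) (z₀ := ρ)
    (by fun_prop) (by rw [hd.deriv]; norm_num)
  have e : zzXi ∘ (fun s : ℂ => 1 - s) = zzXi := funext fun s => zzXi_one_sub s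
  rw [e] at this
  simp [analyticOrderNatAt, this]

lemma zz_mem_one_sub {ρ : ℂ} (h : ρ ∈ nontrivialZetaZeros) : 1 - ρ ∈ nontrivialZetaZeros := by
  rw [← zzXi_zero_iff] at h ⊢
  rw [zzXi_one_sub, h]

lemma zz_const : (completedRiemannZeta₀ 1).re =
    1 + Real.eulerMascheroniConstant / 2 - Real.log (2 * Real.sqrt Real.pi) := by
  have hp := Real.pi_pos
  have e : completedRiemannZeta₀ 1 =
      (((Real.eulerMascheroniConstant - Real.log (4 * Real.pi)) / 2 + 1 : ℝ) : ℂ) := by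
    rw [completedRiemannZeta₀_one]
    push_cast [Complex.ofReal_log (show (0:ℝ) ≤ 4 * Real.pi by positivity)]
    rfl
  rw [e, Complex.ofReal_re]
  have h2 : Real.log (4 * Real.pi) = 2 * Real.log (2 * Real.sqrt Real.pi) := by
    have : 4 * Real.pi = (2 * Real.sqrt Real.pi) ^ 2 := by
      rw [mul_pow, Real.sq_sqrt hp.le]; norm_num
    rw [this, Real.log_pow]
    norm_num
  rw [h2]
  ring

/-- The finite set of nontrivial zeros of norm at most `R`. -/
noncomputable def zzT (R : ℝ) : Finset nontrivialZetaZeros :=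
  Set.Finite.toFinset (s := {ρ : nontrivialZetaZeros | ‖(ρ : ℂ)‖ ≤ R}) (by
    have h := (isCompact_closedBall (0 : ℂ) R).inter_riemannZetaZeros_finite
    refine Set.Finite.of_finite_image (f := Subtype.val) (h.subset ?_) Subtype.val_injective.injOn
    rintro _ ⟨ρ, hρ, rfl⟩
    exact ⟨by simpa using hρ, ρ.2.1⟩)

lemma zz_mem_T {R : ℝ} {ρ : nontrivialZetaZeros} : ρ ∈ zzT R ↔ ‖(ρ : ℂ)‖ ≤ R := by
  simp [zzT]

lemma zz_tendsto : Tendsto (fun R : ℝ => ∑ ρ ∈ zzT R,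
    (zetaZeroOrder ρ : ℝ) * ((1 / (ρ : ℂ)).re + (1 / (1 - (ρ : ℂ))).re)) atTop
    (𝓝 (2 * (completedRiemannZeta₀ 1).re)) := by
  obtain ⟨K, hK, hb⟩ := zz_xi_bound
  rw [tendsto_iff_norm_sub_tendsto_zero]
  have hlim : Tendsto (fun R : ℝ => 64 * K / R ^ 2 + 1536 / Real.sqrt R) atTop (𝓝 0) := by
    have h1 : Tendsto (fun R : ℝ => 64 * K / R ^ 2) atTop (𝓝 0) :=
      tendsto_const_nhds.div_atTop (tendsto_pow_atTop two_ne_zero)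
    have h2 : Tendsto (fun R : ℝ => 1536 / Real.sqrt R) atTop (𝓝 0) :=
      tendsto_const_nhds.div_atTop Real.tendsto_sqrt_atTop
    simpa using h1.add h2
  refine squeeze_zero' (Eventually.of_forall fun _ => norm_nonneg _) ?_ hlim
  filter_upwards [eventually_ge_atTop 8] with R hR
  have hsq : 0 < Real.sqrt R := Real.sqrt_pos.2 (by linarith)
  have key := zz_key zzXi zzXi_diff zzXi_zero (by rw [zzXi_one]; exact one_ne_zero) R
    (K + 24 * R * Real.sqrt R) hR (by positivity) (hb R hR)
    ((zzT R).map (Function.Embedding.subtype _)) (fun z => by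
      rw [zzXi_zero_iff]
      simp only [Finset.mem_map, zz_mem_T, Function.Embedding.subtype_apply]
      constructor
      · rintro ⟨ρ, hρ, rfl⟩
        exact ⟨ρ.2, hρ⟩
      · rintro ⟨h1, h2⟩
        exact ⟨⟨z, h1⟩, h2, rfl⟩)
  rw [Finset.sum_map, zzXi_logDeriv] at key
  have hbd : 64 * (K + 24 * R * Real.sqrt R) / R ^ 2 = 64 * K / R ^ 2 + 1536 / Real.sqrt R := by
    have : R = Real.sqrt R ^ 2 := (Real.sq_sqrt (by linarith)).symm
    have hR0 : R ≠ 0 := by linarith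
    rw [mul_add, add_div]
    congr 1
    rw [div_eq_div_iff (by positivity) hsq.ne']
    calc _ = 1536 * R * (Real.sqrt R ^ 2) := by ring
      _ = _ := by rw [← this]; ring
  rw [hbd] at key
  refine le_trans ?_ key
  refine le_trans (le_of_eq ?_) (Complex.abs_re_le_norm _)
  rw [Real.norm_eq_abs]
  congr 1
  rw [Complex.sub_re, Complex.re_sum, Complex.neg_re, Complex.mul_re]
  simp only [Complex.re_ofNat, Complex.im_ofNat, zero_mul, sub_zero]
  have : ∀ ρ ∈ zzT R, ((analyticOrderNatAt zzXi ((Function.Embedding.subtype _) ρ) : ℂ) *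
      (1 / (0 - (Function.Embedding.subtype _) ρ) - 1 / (1 - (Function.Embedding.subtype _) ρ))).re
      = -((zetaZeroOrder ρ : ℝ) * ((1 / (ρ : ℂ)).re + (1 / (1 - (ρ : ℂ))).re)) := by
    intro ρ _
    rw [zzXi_order ρ.2, Function.Embedding.subtype_apply, zero_sub, ← Complex.ofReal_natCast,
      Complex.re_ofReal_mul, Complex.sub_re, one_div_neg_eq_neg_one_div, Complex.neg_re]
    ring
  rw [Finset.sum_congr rfl this, Finset.sum_neg_distrib]
  ring

lemma zz_re_pos {ρ : ℂ} (h : 0 < ρ.re) : 0 ≤ (1 / ρ).re := by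
  rw [one_div, Complex.inv_re]
  exact div_nonneg h.le (Complex.normSq_nonneg _)

/-- the sum over all nontrivial zeros `ρ` of `ζ`, counted with multiplicity,
of `Re(1/ρ)` converges absolutely and equals `1 + γ/2 − log(2√π)`. -/
theorem sum_re_inv_zeta_zeros :
    Summable (fun ρ : nontrivialZetaZeros =>
      (zetaZeroOrder ρ : ℝ) * (1 / (ρ : ℂ)).re) ∧
    ∑' ρ : nontrivialZetaZeros, (zetaZeroOrder ρ : ℝ) * (1 / (ρ : ℂ)).re =
      1 + Real.eulerMascheroniConstant / 2 - Real.log (2 * Real.sqrt Real.pi) := by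
  rw [← zz_const]
  set f : nontrivialZetaZeros → ℝ := fun ρ => (zetaZeroOrder ρ : ℝ) * (1 / (ρ : ℂ)).re with hf
  set g : nontrivialZetaZeros → ℝ := fun ρ =>
    (zetaZeroOrder ρ : ℝ) * ((1 / (ρ : ℂ)).re + (1 / (1 - (ρ : ℂ))).re) with hg
  let e : nontrivialZetaZeros ≃ nontrivialZetaZeros :=
    { toFun := fun ρ => ⟨1 - ρ, zz_mem_one_sub ρ.2⟩
      invFun := fun ρ => ⟨1 - ρ, zz_mem_one_sub ρ.2⟩
      left_inv := fun ρ => by simp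
      right_inv := fun ρ => by simp }
  have h1 : ∀ ρ : nontrivialZetaZeros, 0 ≤ (1 / (ρ : ℂ)).re := fun ρ => zz_re_pos ρ.2.2.1
  have hf0 : ∀ ρ, 0 ≤ f ρ := fun ρ => mul_nonneg (Nat.cast_nonneg _) (h1 ρ)
  have hgf : ∀ ρ, g ρ = f ρ + f (e ρ) := by
    intro ρ
    have : zetaZeroOrder (1 - (ρ : ℂ)) = zetaZeroOrder ρ := by
      rw [zzXi_order ρ.2, zzXi_order (zz_mem_one_sub ρ.2), zzXi_order_symm]
    simp only [hf, hg, e, Equiv.coe_fn_mk, this]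
    ring
  have hg0 : ∀ ρ, 0 ≤ g ρ := fun ρ => by rw [hgf]; exact add_nonneg (hf0 _) (hf0 _)
  have hTmono : Monotone zzT := by
    intro a b hab ρ hρ
    rw [zz_mem_T] at hρ ⊢
    exact hρ.trans hab
  have hT : Tendsto zzT atTop atTop :=
    tendsto_atTop_finset_of_monotone hTmono fun ρ => ⟨‖(ρ : ℂ)‖, zz_mem_T.2 le_rfl⟩
  have hlim : Tendsto (fun R => ∑ ρ ∈ zzT R, g ρ) atTop (𝓝 (2 * (completedRiemannZeta₀ 1).re)) :=
    zz_tendsto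
  have hSmono : Monotone (fun R => ∑ ρ ∈ zzT R, g ρ) := fun a b hab =>
    Finset.sum_le_sum_of_subset_of_nonneg (hTmono hab) fun _ _ _ => hg0 _
  have hgs : Summable g := by
    refine summable_of_sum_le hg0 (c := 2 * (completedRiemannZeta₀ 1).re) fun u => ?_
    obtain ⟨R, hR⟩ := (hT.eventually (eventually_ge_atTop u)).exists
    exact (Finset.sum_le_sum_of_subset_of_nonneg hR fun _ _ _ => hg0 _).trans
      (hSmono.ge_of_tendsto hlim R)
  have hgt : ∑' ρ, g ρ = 2 * (completedRiemannZeta₀ 1).re :=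
    tendsto_nhds_unique (hgs.hasSum.comp hT) hlim
  have hfs : Summable f := Summable.of_nonneg_of_le hf0
    (fun ρ => by rw [hgf]; linarith [hf0 (e ρ)]) hgs
  refine ⟨hfs, ?_⟩
  have hadd : ∑' ρ, g ρ = ∑' ρ, f ρ + ∑' ρ, f (e ρ) := by
    have hfe : Summable fun ρ => f (e ρ) := (e.summable_iff (f := f)).2 hfs
    rw [← hfs.tsum_add hfe]
    exact tsum_congr hgf
  rw [e.tsum_eq f] at hadd
  linarith
end

section
/- Let X be the Dirichlet character modulo 5 with X(2) = i, let X̄ be its conjugate character, let κ = (√(10 − 2√5) − 2)/(√5 − 1), and define the Davenport–Heilbronn function D(s) = ((1 − iκ)/2)·L(s, X) + ((1 + iκ)/2)·L(s, X̄). Then for every complex s such that neither (1+s)/2 nor (2−s)/2 is a non-positive integer, one has (π/5)^{−s/2}·Γ((1+s)/2)·D(s) = (π/5)^{−(1−s)/2}·Γ((2−s)/2)·D(1−s). -/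
open Complex Real

/-- The constant `κ = (√(10 − 2√5) − 2)/(√5 − 1)` in the Davenport–Heilbronn function. -/
noncomputable def dhKappa : ℝ :=
  (Real.sqrt (10 - 2 * Real.sqrt 5) - 2) / (Real.sqrt 5 - 1)

/-- The Davenport–Heilbronn function built from a Dirichlet character `X` mod 5:
`D(s) = ((1 − iκ)/2)·L(s, X) + ((1 + iκ)/2)·L(s, X̄)`, where `X̄` is the conjugate character. -/
noncomputable def dhFunction (X : DirichletCharacter ℂ 5) (s : ℂ) : ℂ :=
  ((1 - Complex.I * dhKappa) / 2) * X.LFunction s +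
    ((1 + Complex.I * dhKappa) / 2) * DirichletCharacter.LFunction (X.ringHomComp (starRingEnd ℂ)) s


lemma dh_aux_sin1 : Real.sin (π / 5) = √(10 - 2 * √5) / 4 := by
  have h5 : (√5) ^ 2 = 5 := Real.sq_sqrt (by norm_num)
  have h5' : √5 < 5 := by nlinarith [Real.sqrt_nonneg 5]
  have hc : (√(10 - 2 * √5)) ^ 2 = 10 - 2 * √5 := Real.sq_sqrt (by linarith)
  have hs : 0 < Real.sin (π / 5) := Real.sin_pos_of_pos_of_lt_pi (by positivity) (by linarith [Real.pi_pos])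
  have := Real.sin_sq_add_cos_sq (π / 5)
  rw [Real.cos_pi_div_five] at this
  rw [← sq_eq_sq₀ hs.le (by positivity)]
  nlinarith

lemma dh_aux_sin2 : Real.sin (2 * π / 5) = √(10 - 2 * √5) * (1 + √5) / 8 := by
  rw [mul_div_assoc, Real.sin_two_mul, dh_aux_sin1, Real.cos_pi_div_five]; ring

lemma dh_aux_sin3 : Real.sin (4 * π / 5) = √(10 - 2 * √5) / 4 := by
  rw [← dh_aux_sin1, ← Real.sin_pi_sub]; congr 1; ring

lemma dh_aux_vals (χ : DirichletCharacter ℂ 5) (w : ℂ) (hw : w ^ 2 = -1) (h : χ 2 = w) :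
    χ 0 = 0 ∧ χ 1 = 1 ∧ χ 3 = -w ∧ χ 4 = -1 := by
  have h4 : χ 4 = -1 := by
    rw [show (4 : ZMod 5) = 2 * 2 by decide, map_mul, h, ← sq, hw]
  refine ⟨?_, map_one χ, ?_, h4⟩
  · exact χ.map_zero' (by norm_num)
  · rw [show (3 : ZMod 5) = 2 * 4 by decide, map_mul, h, h4]; ring

lemma dh_aux_odd (χ : DirichletCharacter ℂ 5) (w : ℂ) (hw : w ^ 2 = -1) (h : χ 2 = w) :
    χ.Odd := by
  have := (dh_aux_vals χ w hw h).2.2.2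
  rwa [show (4 : ZMod 5) = -1 by decide] at this

lemma dh_aux_prim (χ : DirichletCharacter ℂ 5) (w : ℂ) (hw : w ^ 2 = -1) (h : χ 2 = w) :
    χ.IsPrimitive := by
  rcases (Nat.dvd_prime (by norm_num : Nat.Prime 5)).1 χ.conductor_dvd_level with h1 | h1
  · exfalso
    rw [← DirichletCharacter.eq_one_iff_conductor_eq_one] at h1
    have := (dh_aux_vals χ w hw h).2.2.2
    rw [h1, MulChar.one_apply (by decide)] at this
    norm_num at this
  · exact h1

lemma dh_aux_diff (j : ℤ) : (ZMod.stdAddChar ((j : ZMod 5)) : ℂ) - ZMod.stdAddChar (((-j : ℤ) : ZMod 5))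
    = 2 * I * (Real.sin (2 * π * j / 5) : ℝ) := by
  rw [ZMod.stdAddChar_coe, ZMod.stdAddChar_coe]
  have e1 : 2 * (π : ℂ) * I * j / (5 : ℕ) = ((2 * π * j / 5 : ℝ) : ℂ) * I := by push_cast; ring
  have e2 : 2 * (π : ℂ) * I * (-j : ℤ) / (5 : ℕ) = (-(2 * π * j / 5 : ℝ) : ℂ) * I := by push_cast; ring
  rw [e1, e2, Complex.ofReal_sin, Complex.exp_mul_I, Complex.exp_mul_I, Complex.cos_neg, Complex.sin_neg]
  ring

lemma dh_aux_root (χ : DirichletCharacter ℂ 5) (w : ℂ) (hw : w ^ 2 = -1) (h : χ 2 = w) :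
    χ.rootNumber = ((√(10 - 2 * √5) : ℝ) : ℂ) * ((1 + (√5 : ℝ)) / 4 + w / 2) / (√5 : ℝ) := by
  obtain ⟨h0, h1, h3, h4⟩ := dh_aux_vals χ w hw h
  have hne : ¬ χ.Even := by
    intro he
    have : χ (-1) = 1 := he
    rw [show (-1 : ZMod 5) = 4 by decide, h4] at this
    norm_num at this
  have d1 := dh_aux_diff 1
  have d2 := dh_aux_diff 2
  rw [show 2 * π * ((1 : ℤ) : ℝ) / 5 = 2 * π / 5 by push_cast; ring, dh_aux_sin2] at d1
  rw [show 2 * π * ((2 : ℤ) : ℝ) / 5 = 4 * π / 5 by push_cast; ring, dh_aux_sin3] at d2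
  rw [show (((-1 : ℤ)) : ZMod 5) = 4 by decide, show (((1 : ℤ)) : ZMod 5) = 1 by decide] at d1
  rw [show (((-2 : ℤ)) : ZMod 5) = 3 by decide, show (((2 : ℤ)) : ZMod 5) = 2 by decide] at d2
  have hs : (((5 : ℕ) : ℂ)) ^ (1 / 2 : ℂ) = ((√5 : ℝ) : ℂ) := by
    rw [Real.sqrt_eq_rpow, Complex.ofReal_cpow (by norm_num)]; norm_num
  have hg : gaussSum χ ZMod.stdAddChar = χ 0 * ZMod.stdAddChar (0 : ZMod 5)
      + χ 1 * ZMod.stdAddChar (1 : ZMod 5) + χ 2 * ZMod.stdAddChar (2 : ZMod 5)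
      + χ 3 * ZMod.stdAddChar (3 : ZMod 5) + χ 4 * ZMod.stdAddChar (4 : ZMod 5) :=
    Fin.sum_univ_five (fun a : ZMod 5 => χ a * ZMod.stdAddChar a)
  rw [DirichletCharacter.rootNumber, if_neg hne, hs, pow_one, hg, h0, h1, h3, h4, h]
  congr 1
  rw [div_eq_iff I_ne_zero]
  push_cast at d1 d2 ⊢
  linear_combination d1 + w * d2

lemma dh_aux_kappa (w : ℂ) (hw : w ^ 2 = -1) :
    (1 - w * dhKappa) * (((√(10 - 2 * √5) : ℝ) : ℂ) * ((1 + (√5 : ℝ)) / 4 + w / 2) / (√5 : ℝ))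
      = 1 + w * dhKappa := by
  have h5 : (√5) ^ 2 = 5 := Real.sq_sqrt (by norm_num)
  have h5' : √5 < 5 := by nlinarith [Real.sqrt_nonneg 5]
  have h51 : 1 < √5 := by nlinarith [Real.sqrt_nonneg 5]
  have hc : (√(10 - 2 * √5)) ^ 2 = 10 - 2 * √5 := Real.sq_sqrt (by linarith)
  have hk : dhKappa * (√5 - 1) = √(10 - 2 * √5) - 2 := by
    rw [dhKappa, div_mul_cancel₀]; linarith
  generalize √(10 - 2 * √5) = c at *
  generalize dhKappa = k at *
  generalize √5 = r at *
  have hr1 : r - 1 ≠ 0 := by linarith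
  have A : c * (1 + r) / 4 + c / 2 * k = r := by
    apply mul_right_cancel₀ hr1
    linear_combination c / 2 * hk + hc / 2 + (c / 4 - 1) * h5
  have B : c / 2 - c * (1 + r) / 4 * k = r * k := by
    apply mul_right_cancel₀ hr1
    linear_combination (-c * (1 + r) / 4 - r) * hk - (1 + r) / 4 * hc + h5 / 2
  have hr : (r : ℂ) ≠ 0 := by exact_mod_cast (by linarith : r ≠ 0)
  have A' : (c : ℂ) * (1 + r) / 4 + c / 2 * k = r := by exact_mod_cast A
  have B' : (c : ℂ) / 2 - c * (1 + r) / 4 * k = r * k := by exact_mod_cast B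
  rw [mul_div_assoc', div_eq_iff hr]
  linear_combination A' + w * B' - c * k / 2 * hw

lemma dh_aux_conj (X : DirichletCharacter ℂ 5) : X.ringHomComp (starRingEnd ℂ) = X⁻¹ :=
  MulChar.star_eq_inv X

lemma dh_aux_L (χ : DirichletCharacter ℂ 5) (hχ : χ.Odd) (s : ℂ)
    (hs : ¬ ∃ n : ℕ, (1 + s) / 2 = -(n : ℂ)) :
    ((π : ℂ) / 5) ^ (-s / 2) * Complex.Gamma ((1 + s) / 2) * χ.LFunction s
      = (5 : ℂ) ^ (s / 2) * (π : ℂ) ^ (1 / 2 : ℂ) * χ.completedLFunction s := by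
  have hpi : (π : ℂ) ≠ 0 := by exact_mod_cast Real.pi_ne_zero
  have hG : Complex.Gamma ((1 + s) / 2) ≠ 0 :=
    Complex.Gamma_ne_zero (fun n hn => hs ⟨n, hn⟩)
  have hp : ((π : ℂ) / 5) ^ (-s / 2) = (5 : ℂ) ^ (s / 2) * (π : ℂ) ^ (-s / 2) := by
    rw [show ((π : ℂ) / 5) = (π : ℝ) * ((5⁻¹ : ℝ) : ℂ) by push_cast; ring,
      Complex.mul_cpow_ofReal_nonneg Real.pi_pos.le (by norm_num), mul_comm]
    congr 1
    rw [show ((5⁻¹ : ℝ) : ℂ) = ((5 : ℂ))⁻¹ by push_cast; ring, neg_div, Complex.cpow_neg,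
      Complex.inv_cpow, inv_inv]
    rw [show (5 : ℂ) = ((5 : ℝ) : ℂ) by norm_num, Complex.arg_ofReal_of_nonneg (by norm_num)]
    exact Real.pi_pos.ne
  rw [DirichletCharacter.LFunction_eq_completed_div_gammaFactor χ s (Or.inr (by norm_num)),
    hχ.gammaFactor_def, Complex.Gammaℝ_def, hp,
    show -s / 2 = -(s + 1) / 2 + 1 / 2 by ring, Complex.cpow_add _ _ hpi, add_comm s 1]
  have hq : (π : ℂ) ^ (-(1 + s) / 2) ≠ 0 := by simp [Complex.cpow_eq_zero_iff, hpi]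
  field_simp

/-- the self-dual functional equation of the Davenport–Heilbronn function:
for the character `X` mod 5 with `X(2) = i` and all `s` such that neither `(1+s)/2` nor
`(2−s)/2` is a non-positive integer,
`(π/5)^{−s/2}·Γ((1+s)/2)·D(s) = (π/5)^{−(1−s)/2}·Γ((2−s)/2)·D(1−s)`. -/
theorem dh_functional_equation (X : DirichletCharacter ℂ 5) (hX : X 2 = Complex.I) :
    ∀ s : ℂ, (¬ ∃ n : ℕ, (1 + s) / 2 = -(n : ℂ)) → (¬ ∃ n : ℕ, (2 - s) / 2 = -(n : ℂ)) →
      ((Real.pi : ℂ) / 5) ^ (-s / 2) * Complex.Gamma ((1 + s) / 2) * dhFunction X s =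
        ((Real.pi : ℂ) / 5) ^ (-(1 - s) / 2) * Complex.Gamma ((2 - s) / 2) *
          dhFunction X (1 - s) := by
  intro s h1 h2
  have hX' : X⁻¹ 2 = -I := by
    rw [← dh_aux_conj, MulChar.ringHomComp_apply, hX, Complex.conj_I]
  have hI : (-I) ^ 2 = -1 := by simp
  have oX := dh_aux_odd X I I_sq hX
  have oX' := dh_aux_odd X⁻¹ (-I) hI hX'
  have f := (dh_aux_prim X I I_sq hX).completedLFunction_one_sub s
  have f' := (dh_aux_prim X⁻¹ (-I) hI hX').completedLFunction_one_sub s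
  rw [inv_inv] at f'
  have k := dh_aux_kappa I I_sq
  have k' := dh_aux_kappa (-I) hI
  rw [← dh_aux_root X I I_sq hX] at k
  rw [← dh_aux_root X⁻¹ (-I) hI hX'] at k'
  have h2' : ¬ ∃ n : ℕ, (1 + (1 - s)) / 2 = -(n : ℂ) := by
    rwa [show 1 + (1 - s) = 2 - s by ring]
  have a := dh_aux_L X oX s h1
  have a' := dh_aux_L X⁻¹ oX' s h1
  have b := dh_aux_L X oX (1 - s) h2'
  have b' := dh_aux_L X⁻¹ oX' (1 - s) h2'
  rw [show 1 + (1 - s) = 2 - s by ring] at b b'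
  have p : (5 : ℂ) ^ (s / 2) = 5 ^ ((1 - s) / 2) * ((5 : ℕ) : ℂ) ^ (s - 1 / 2) := by
    push_cast
    rw [← Complex.cpow_add _ _ (by norm_num)]; congr 1; ring
  rw [f] at b
  rw [f'] at b'
  rw [p] at a a'
  unfold dhFunction
  rw [dh_aux_conj]
  generalize ((5 : ℕ) : ℂ) ^ (s - 1 / 2) = P at *
  generalize (5 : ℂ) ^ ((1 - s) / 2) = Q at *
  generalize (π : ℂ) ^ (1 / 2 : ℂ) = R at *
  linear_combination (1 - I * dhKappa) / 2 * a + (1 + I * dhKappa) / 2 * a'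
    - (1 - I * dhKappa) / 2 * b - (1 + I * dhKappa) / 2 * b'
    - Q * P * R * X⁻¹.completedLFunction s / 2 * k - Q * P * R * X.completedLFunction s / 2 * k'
end

section
/- Let X be the Dirichlet character modulo 5 with X(2) = i, κ = (√(10 − 2√5) − 2)/(√5 − 1), and D(s) = ((1 − iκ)/2)·L(s, X) + ((1 + iκ)/2)·L(s, X̄) the Davenport–Heilbronn function. Then there exists a complex number s with D(s) = 0, 0.8085 < Re s < 0.8086, and 85.6993 < Im s < 85.6994; in particular D has a zero s with 1/2 < Re s < 1, so the analogue of the Riemann Hypothesis fails for D. -/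
open Complex Real

namespace DH


/-- fixed-point scale -/
def S : ℕ := 1000000000000000000

/-- a complex ball: centre `(re + im i)/S`, radius `rad/S` -/
structure B where
  re : ℤ
  im : ℤ
  rad : ℕ

def B.add (a b : B) : B := ⟨a.re + b.re, a.im + b.im, a.rad + b.rad⟩
def B.sub (a b : B) : B := ⟨a.re - b.re, a.im - b.im, a.rad + b.rad⟩

/-- product divided by the natural number `j` -/
def B.mulDiv (a b : B) (j : ℕ) : B :=
  ⟨(a.re * b.re - a.im * b.im) / ((S * j : ℕ) : ℤ), (a.re * b.im + a.im * b.re) / ((S * j : ℕ) : ℤ),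
    ((a.re.natAbs + a.im.natAbs) * b.rad + (b.re.natAbs + b.im.natAbs + b.rad) * a.rad) / (S * j) + 3⟩

/-- product with a number `b` known to have norm at most one -/
def B.mulUnit (a b : B) : B :=
  ⟨(a.re * b.re - a.im * b.im) / (S : ℤ), (a.re * b.im + a.im * b.re) / (S : ℤ),
    (a.re.natAbs + a.im.natAbs) * b.rad / S + a.rad + 3⟩

def logSum (n : ℕ) : ℕ → ℕ
  | 0 => 0
  | K + 1 => logSum n K + S / ((K + 1) * (n + 1) ^ (K + 1))

/-- radius for `logSum n K` -/
def logRad (n K : ℕ) : ℕ := K + 1 + 2 * S / (n + 1) ^ (K + 1)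

def zBall (n K k : ℕ) : B :=
  ⟨-((8085171825 * logSum n K / (10000000000 * 2 ^ k) : ℕ) : ℤ),
   -((856993484854 * logSum n K / (10000000000 * 2 ^ k) : ℕ) : ℤ), 86 * logRad n K / 2 ^ k + 3⟩

/-- Horner evaluation: `J` steps -/
def horner (z : B) (E : B) : ℕ → B
  | 0 => E
  | j + 1 => horner z (B.add ⟨S, 0, 0⟩ (z.mulDiv E (j + 1))) j

def sqIter (E : B) : ℕ → B
  | 0 => E
  | k + 1 => sqIter (E.mulUnit E) k

def qBall (n K k J : ℕ) : B :=
  sqIter (B.add (horner (zBall n K k) ⟨S, 0, 0⟩ J) ⟨0, 0, 2 * S / ((n * 2 ^ k / 86) ^ (J+1) * (J+1).factorial) + 1⟩) k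

structure St where
  n : ℕ
  L : B
  v : B
  F1 : B
  F2 : B
  D1 : B
  D2 : B

def St.upd (K k J : ℕ) (s : St) : St :=
  { n := s.n + 1, L := s.L.add ⟨logSum s.n K, 0, logRad s.n K⟩, v := s.v.mulUnit (qBall s.n K k J),
    F1 := if s.n % 5 = 1 then s.F1.add s.v else if s.n % 5 = 4 then s.F1.sub s.v else s.F1,
    F2 := if s.n % 5 = 2 then s.F2.add s.v else if s.n % 5 = 3 then s.F2.sub s.v else s.F2,
    D1 := if s.n % 5 = 1 then s.D1.add (s.v.mulDiv s.L 1) else if s.n % 5 = 4 then s.D1.sub (s.v.mulDiv s.L 1) else s.D1,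
    D2 := if s.n % 5 = 2 then s.D2.add (s.v.mulDiv s.L 1) else if s.n % 5 = 3 then s.D2.sub (s.v.mulDiv s.L 1) else s.D2 }

def run (K k J : ℕ) : ℕ → St → St
  | 0, s => s
  | m + 1, s => run K k J m (s.upd K k J)
def B.beq (a b : B) : Bool := decide (a.re = b.re) && decide (a.im = b.im) && decide (a.rad = b.rad)
def St.beq (a b : St) : Bool := decide (a.n = b.n) && a.L.beq b.L && a.v.beq b.v && a.F1.beq b.F1 && a.F2.beq b.F2 && a.D1.beq b.D1 && a.D2.beq b.D2
def st0 : St := ⟨1, ⟨0,0,0⟩, ⟨S,0,0⟩,⟨0,0,0⟩,⟨0,0,0⟩,⟨0,0,0⟩,⟨0,0,0⟩⟩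

open Complex in
def B.mem (b : B) (x : ℂ) : Prop := ‖(S : ℂ) * x - ((b.re : ℂ) + (b.im : ℂ) * I)‖ ≤ (b.rad : ℝ)

lemma S_pos : (0 : ℝ) < (S : ℝ) := by norm_num [S]

lemma B.mem_add {a b : B} {x y : ℂ} (ha : a.mem x) (hb : b.mem y) : (a.add b).mem (x + y) := by
  unfold B.mem B.add at *
  push_cast
  refine le_trans (le_of_eq ?_) (le_trans (norm_add_le _ _) (add_le_add ha hb))
  congr 1; ring

lemma B.mem_sub {a b : B} {x y : ℂ} (ha : a.mem x) (hb : b.mem y) : (a.sub b).mem (x - y) := by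
  unfold B.mem B.sub at *
  push_cast
  refine le_trans (le_of_eq ?_) (le_trans (norm_sub_le _ _) (add_le_add ha hb))
  congr 1; ring

lemma int_div_err (p : ℤ) (d : ℕ) (hd : 0 < d) : |(p : ℝ) / d - ((p / (d : ℤ) : ℤ) : ℝ)| ≤ 1 := by
  have h1 : (p : ℝ) = (d : ℝ) * ((p / (d : ℤ) : ℤ) : ℝ) + ((p % (d : ℤ) : ℤ) : ℝ) := by
    exact_mod_cast (Int.mul_ediv_add_emod p d).symm
  have h2 : (0 : ℝ) ≤ ((p % (d : ℤ) : ℤ) : ℝ) := by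
    exact_mod_cast Int.emod_nonneg p (by omega)
  have h3 : ((p % (d : ℤ) : ℤ) : ℝ) ≤ d := by
    exact_mod_cast (Int.emod_lt_of_pos p (by omega)).le
  have hd' : (0 : ℝ) < d := by exact_mod_cast hd
  have : (p : ℝ) / d - ((p / (d : ℤ) : ℤ) : ℝ) = ((p % (d : ℤ) : ℤ) : ℝ) / d := by
    rw [eq_div_iff hd'.ne', sub_mul, div_mul_cancel₀ _ hd'.ne']
    linarith
  rw [this, abs_of_nonneg (by positivity)]
  exact div_le_one_of_le₀ h3 hd'.le

lemma nat_div_lt (p d : ℕ) (hd : 0 < d) : (p : ℝ) / d ≤ ((p / d : ℕ) : ℝ) + 1 := by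
  have hd' : (0 : ℝ) < d := by exact_mod_cast hd
  rw [div_le_iff₀ hd']
  have := Nat.lt_mul_div_succ p hd
  have h2 : (p : ℝ) ≤ d * ((p / d : ℕ) + 1 : ℝ) := by exact_mod_cast this.le
  linarith

open Complex in
lemma pair_norm (a b : ℝ) (ha : |a| ≤ 1) (hb : |b| ≤ 1) : ‖(a : ℂ) + (b : ℂ) * I‖ ≤ 2 := by
  refine (Complex.norm_le_abs_re_add_abs_im _).trans ?_
  simp
  linarith

open Complex in
lemma center_norm (a b : ℤ) : ‖(a : ℂ) + (b : ℂ) * I‖ ≤ ((a.natAbs + b.natAbs : ℕ) : ℝ) := by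
  refine (Complex.norm_le_abs_re_add_abs_im _).trans ?_
  simp [Nat.cast_natAbs]

open Complex in
/-- rounding of a complex product -/
lemma round_prod (a b : B) (d : ℕ) (hd : 0 < d) :
    ‖((a.re : ℂ) + (a.im : ℂ) * I) * ((b.re : ℂ) + (b.im : ℂ) * I) / (d : ℂ)
      - ((((a.re * b.re - a.im * b.im) / (d : ℤ) : ℤ) : ℂ)
        + (((a.re * b.im + a.im * b.re) / (d : ℤ) : ℤ) : ℂ) * I)‖ ≤ 2 := by
  have h1 := int_div_err (a.re * b.re - a.im * b.im) d hd
  have h2 := int_div_err (a.re * b.im + a.im * b.re) d hd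
  have := pair_norm _ _ h1 h2
  refine le_trans (le_of_eq ?_) this
  congr 1
  have hd' : (d : ℂ) ≠ 0 := by exact_mod_cast hd.ne'
  push_cast
  field_simp
  ring_nf
  simp only [I_sq]
  ring

open Complex in
lemma B.mem_mulDiv {a b : B} {x y : ℂ} (ha : a.mem x) (hb : b.mem y) (j : ℕ) (hj : 0 < j) :
    (a.mulDiv b j).mem (x * y / j) := by
  unfold B.mem at ha hb
  have hSn : 0 < S := by norm_num [S]
  have hr := round_prod a b (S * j) (Nat.mul_pos hSn hj)
  have ca := center_norm a.re a.im
  have cb := center_norm b.re b.im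
  set P := (a.re : ℂ) + (a.im : ℂ) * I
  set Q := (b.re : ℂ) + (b.im : ℂ) * I
  have hy : ‖(S : ℂ) * y‖ ≤ ((b.re.natAbs + b.im.natAbs + b.rad : ℕ) : ℝ) := by
    calc ‖(S : ℂ) * y‖ = ‖Q + ((S : ℂ) * y - Q)‖ := by congr 1; ring
      _ ≤ ‖Q‖ + ‖(S : ℂ) * y - Q‖ := norm_add_le _ _
      _ ≤ _ := by push_cast at cb ⊢; linarith
  have hmain : ‖((S : ℂ) * x) * ((S : ℂ) * y) - P * Q‖ ≤
      (((a.re.natAbs + a.im.natAbs) * b.rad + (b.re.natAbs + b.im.natAbs + b.rad) * a.rad : ℕ) : ℝ) := by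
    calc ‖((S : ℂ) * x) * ((S : ℂ) * y) - P * Q‖
        = ‖P * ((S : ℂ) * y - Q) + ((S : ℂ) * y) * ((S : ℂ) * x - P)‖ := by congr 1; ring
      _ ≤ ‖P‖ * ‖(S : ℂ) * y - Q‖ + ‖(S : ℂ) * y‖ * ‖(S : ℂ) * x - P‖ := by
          refine (norm_add_le _ _).trans ?_
          rw [norm_mul, norm_mul]
      _ ≤ ((a.re.natAbs + a.im.natAbs : ℕ) : ℝ) * b.rad
          + ((b.re.natAbs + b.im.natAbs + b.rad : ℕ) : ℝ) * a.rad := by gcongr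
      _ = _ := by push_cast; ring
  have hd0 : ((S * j : ℕ) : ℂ) ≠ 0 := by exact_mod_cast (Nat.mul_pos hSn hj).ne'
  have hd0' : (0 : ℝ) < ((S * j : ℕ) : ℝ) := by exact_mod_cast (Nat.mul_pos hSn hj)
  have hn := nat_div_lt ((a.re.natAbs + a.im.natAbs) * b.rad
    + (b.re.natAbs + b.im.natAbs + b.rad) * a.rad) (S * j) (Nat.mul_pos hSn hj)
  have h5 : ‖(((S : ℂ) * x) * ((S : ℂ) * y) - P * Q) / ((S * j : ℕ) : ℂ)‖ ≤ _ :=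
    calc _ = ‖((S : ℂ) * x) * ((S : ℂ) * y) - P * Q‖ / ((S * j : ℕ) : ℝ) := by
            rw [norm_div, Complex.norm_natCast]
      _ ≤ _ := by
        refine (div_le_div_of_nonneg_right hmain hd0'.le).trans hn
  unfold B.mem B.mulDiv
  simp only
  rw [Nat.cast_add]
  have hS0 : (S : ℂ) ≠ 0 := by exact_mod_cast hSn.ne'
  have hj0 : (j : ℂ) ≠ 0 := by exact_mod_cast hj.ne'
  have e : (S : ℂ) * (x * y / j) = (((S : ℂ) * x) * ((S : ℂ) * y) - P * Q) / ((S * j : ℕ) : ℂ)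
      + P * Q / ((S * j : ℕ) : ℂ) := by
    push_cast
    field_simp
    ring
  rw [e, add_sub_assoc]
  refine (norm_add_le _ _).trans ?_
  push_cast at *
  linarith

open Complex in
lemma B.mem_mulUnit {a b : B} {x y : ℂ} (ha : a.mem x) (hb : b.mem y) (hy : ‖y‖ ≤ 1) :
    (a.mulUnit b).mem (x * y) := by
  unfold B.mem at ha hb
  have hSn : 0 < S := by norm_num [S]
  have hr := round_prod a b S hSn
  have ca := center_norm a.re a.im
  set P := (a.re : ℂ) + (a.im : ℂ) * I
  set Q := (b.re : ℂ) + (b.im : ℂ) * I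
  have hS0 : (S : ℂ) ≠ 0 := by exact_mod_cast hSn.ne'
  have hSr : (0 : ℝ) < (S : ℝ) := by exact_mod_cast hSn
  have hn := nat_div_lt ((a.re.natAbs + a.im.natAbs) * b.rad) S hSn
  have e : (S : ℂ) * (x * y) = P * ((S : ℂ) * y - Q) / (S : ℂ) + ((S : ℂ) * x - P) * y
      + P * Q / (S : ℂ) := by
    field_simp
    ring
  have h1 : ‖P * ((S : ℂ) * y - Q) / (S : ℂ)‖ ≤ (((a.re.natAbs + a.im.natAbs) * b.rad / S : ℕ) : ℝ) + 1 := by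
    rw [norm_div, norm_mul, Complex.norm_natCast]
    refine le_trans ?_ hn
    push_cast at ca ⊢
    gcongr
  have h2 : ‖((S : ℂ) * x - P) * y‖ ≤ a.rad := by
    rw [norm_mul]
    calc _ ≤ (a.rad : ℝ) * 1 := by gcongr
      _ = _ := mul_one _
  unfold B.mem B.mulUnit
  simp only
  rw [e, add_sub_assoc, Nat.cast_add, Nat.cast_add]
  refine (norm_add_le _ _).trans ?_
  have := norm_add_le (P * ((S : ℂ) * y - Q) / (S : ℂ)) (((S : ℂ) * x - P) * y)
  push_cast at *
  linarith

lemma B.mem_one : B.mem ⟨S, 0, 0⟩ 1 := by simp [B.mem]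
lemma B.mem_zero : B.mem ⟨0, 0, 0⟩ 0 := by simp [B.mem]


/-- the approximate zero -/
noncomputable def s0 : ℂ := ⟨0.8085171825, 85.6993484854⟩

lemma s0_norm : ‖s0‖ ≤ 86 := by
  rw [Complex.norm_def, Real.sqrt_le_left (by norm_num)]
  simp [Complex.normSq_apply, s0]
  norm_num

lemma log_approx (n K : ℕ) (hn : 1 ≤ n) :
    |(S : ℝ) * Real.log (1 + 1 / (n : ℝ)) - (logSum n K : ℝ)| ≤ (logRad n K : ℝ) := by
  have hn' : (1 : ℝ) ≤ n := by exact_mod_cast hn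
  have hSn : (0 : ℝ) < (S : ℝ) := S_pos
  set x : ℝ := 1 / ((n : ℝ) + 1) with hx
  have hx0 : 0 < x := by positivity
  have hx1 : x ≤ 1 / 2 := by
    rw [hx]; apply one_div_le_one_div_of_le <;> linarith
  have hlog : Real.log (1 + 1 / (n : ℝ)) = - Real.log (1 - x) := by
    rw [← Real.log_inv]; congr 1; rw [hx]
    have : (n : ℝ) ≠ 0 := by positivity
    have : (n : ℝ) + 1 ≠ 0 := by positivity
    have h3 : 1 - 1 / ((n : ℝ) + 1) = n / (n + 1) := by field_simp; ring
    rw [h3, inv_div]; field_simp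
  have hb := Real.abs_log_sub_add_sum_range_le (x := x) (by rw [abs_of_pos hx0]; linarith) K
  rw [abs_of_pos hx0] at hb
  have hsum : ∀ K : ℕ, |(S : ℝ) * ∑ i ∈ Finset.range K, x ^ (i + 1) / ((i : ℝ) + 1) - (logSum n K : ℝ)| ≤ K := by
    intro K
    induction K with
    | zero => simp [logSum]
    | succ K ih =>
      rw [Finset.sum_range_succ, logSum]
      have h1 := int_div_err S ((K + 1) * (n + 1) ^ (K + 1)) (by positivity)
      have e : ((S : ℤ) : ℝ) / (((K + 1) * (n + 1) ^ (K + 1) : ℕ) : ℝ) = S * (x ^ (K + 1) / ((K : ℝ) + 1)) := by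
        rw [hx, one_div_pow]; push_cast; field_simp
      rw [e] at h1
      have e2 : (((S : ℤ) / (((K + 1) * (n + 1) ^ (K + 1) : ℕ) : ℤ) : ℤ) : ℝ)
        = ((S / ((K + 1) * (n + 1) ^ (K + 1)) : ℕ) : ℝ) := by
        norm_cast
      rw [e2] at h1
      rw [abs_le] at *
      rw [Nat.cast_add, Nat.cast_add, Nat.cast_one]
      constructor <;> nlinarith
  have h2 := hsum K
  have h3 : x ^ (K + 1) / (1 - x) ≤ 2 * x ^ (K + 1) := by
    rw [div_le_iff₀ (by linarith)]
    nlinarith [pow_pos hx0 (K + 1)]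
  have h4 := nat_div_lt (2 * S) ((n + 1) ^ (K + 1)) (by positivity)
  have e4 : ((2 * S : ℕ) : ℝ) / (((n + 1) ^ (K + 1) : ℕ) : ℝ) = S * (2 * x ^ (K + 1)) := by
    rw [hx, one_div_pow]; push_cast; field_simp
  rw [e4] at h4
  rw [hlog]
  have h5 : |(S : ℝ) * (∑ i ∈ Finset.range K, x ^ (i + 1) / ((i : ℝ) + 1) + Real.log (1 - x))| ≤ S * (2 * x ^ (K + 1)) := by
    rw [abs_mul, abs_of_pos hSn]
    gcongr
    exact hb.trans h3
  unfold logRad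
  push_cast
  rw [abs_le] at *
  constructor <;> nlinarith

/-- the exponent `z = -s0 log(1+1/n) / 2^k` -/
noncomputable def zz (n k : ℕ) : ℂ := -s0 * (Real.log (1 + 1 / (n : ℝ)) : ℂ) / (2 ^ k : ℂ)

open Complex in
lemma zBall_mem (n K k : ℕ) (hn : 1 ≤ n) : (zBall n K k).mem (zz n k) := by
  have hl := log_approx n K hn
  unfold B.mem zBall zz
  simp only
  set l := Real.log (1 + 1 / (n : ℝ))
  set m := logSum n K
  have hd : 0 < 10000000000 * 2 ^ k := by positivity
  have h1 := int_div_err (8085171825 * m : ℕ) (10000000000 * 2 ^ k) hd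
  have h2 := int_div_err (856993484854 * m : ℕ) (10000000000 * 2 ^ k) hd
  have h3 := pair_norm _ _ h1 h2
  have hs : s0 = (((8085171825 : ℝ) / 10000000000 : ℝ) : ℂ) + (((856993484854 : ℝ) / 10000000000 : ℝ) : ℂ) * I := by
    apply Complex.ext <;> simp [s0] <;> norm_num
  have h4 : ‖-s0 * ((S * l - m : ℝ) : ℂ) / (2 ^ k : ℂ)‖ ≤ ((86 * logRad n K / 2 ^ k : ℕ) : ℝ) + 1 := by
    refine le_trans ?_ (nat_div_lt _ _ (by positivity))
    rw [norm_div, norm_mul, norm_neg, Complex.norm_real, norm_pow, Complex.norm_ofNat, Real.norm_eq_abs]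
    push_cast
    have := s0_norm
    gcongr
  set A : ℤ := (8085171825 * m : ℕ) / ((10000000000 * 2 ^ k : ℕ) : ℤ) with hA
  set C : ℤ := (856993484854 * m : ℕ) / ((10000000000 * 2 ^ k : ℕ) : ℤ) with hC
  have e1 : ((8085171825 * m / (10000000000 * 2 ^ k) : ℕ) : ℤ) = A := by
    rw [hA]; norm_cast
  have e2 : ((856993484854 * m / (10000000000 * 2 ^ k) : ℕ) : ℤ) = C := by
    rw [hC]; norm_cast
  rw [e1, e2]
  have e : (S : ℂ) * (-s0 * (l : ℂ) / 2 ^ k) - (((-A : ℤ) : ℂ) + ((-C : ℤ) : ℂ) * I)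
      = -s0 * ((S * l - m : ℝ) : ℂ) / (2 ^ k : ℂ) -
       ((((((8085171825 * m : ℕ) : ℤ) : ℝ) / ((10000000000 * 2 ^ k : ℕ) : ℝ) - (A : ℝ) : ℝ) : ℂ) +
        (((((856993484854 * m : ℕ) : ℤ) : ℝ) / ((10000000000 * 2 ^ k : ℕ) : ℝ) - (C : ℝ) : ℝ) : ℂ) * I) := by
    rw [hs]
    push_cast
    field_simp
    ring
  rw [e]
  refine (norm_sub_le _ _).trans ?_
  rw [Nat.cast_add]
  push_cast at *
  linarith

noncomputable def hornerC (z e : ℂ) : ℕ → ℂ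
  | 0 => e
  | j + 1 => hornerC z (1 + z * e / ((j + 1 : ℕ) : ℂ)) j

lemma horner_mem {zb : B} {z : ℂ} (hz : zb.mem z) (j : ℕ) :
    ∀ (E : B) (e : ℂ), E.mem e → (horner zb E j).mem (hornerC z e j) := by
  induction j with
  | zero => intro E e h; simpa [horner, hornerC] using h
  | succ j ih =>
    intro E e h
    rw [horner, hornerC]
    exact ih _ _ (B.mem_add B.mem_one (B.mem_mulDiv hz h _ (Nat.succ_pos j)))

lemma hornerC_eq (z : ℂ) (j : ℕ) : ∀ e : ℂ, hornerC z e j =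
    ∑ m ∈ Finset.range j, z ^ m / (m.factorial : ℂ) + z ^ j / (j.factorial : ℂ) * e := by
  induction j with
  | zero => intro e; simp [hornerC]
  | succ j ih =>
    intro e
    rw [hornerC, ih, Finset.sum_range_succ, Nat.factorial_succ]
    have : (j.factorial : ℂ) ≠ 0 := by exact_mod_cast j.factorial_ne_zero
    have h2 : ((j + 1 : ℕ) : ℂ) ≠ 0 := by exact_mod_cast Nat.succ_ne_zero j
    push_cast at *
    field_simp
    ring

lemma B.mem_err {b : B} {x y : ℂ} {e : ℕ} (hb : b.mem x) (h : (S : ℝ) * ‖y - x‖ ≤ e) :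
    (b.add ⟨0, 0, e⟩).mem y := by
  have : B.mem ⟨0, 0, e⟩ (y - x) := by
    simpa [B.mem] using h
  have := B.mem_add hb this
  simpa using this

lemma zz_norm (n k : ℕ) (hn : 1 ≤ n) : ‖zz n k‖ ≤ 86 / (n * 2 ^ k) := by
  unfold zz
  have hn' : (1 : ℝ) ≤ n := by exact_mod_cast hn
  rw [norm_div, norm_mul, norm_neg, Complex.norm_real, norm_pow, Complex.norm_ofNat, Real.norm_eq_abs]
  have h0 : 0 ≤ Real.log (1 + 1 / (n : ℝ)) := Real.log_nonneg (by simp)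
  have h1 : Real.log (1 + 1 / (n : ℝ)) ≤ 1 / n := by
    have := Real.log_le_sub_one_of_pos (x := 1 + 1 / (n : ℝ)) (by positivity)
    linarith
  rw [abs_of_nonneg h0]
  calc _ ≤ 86 * (1 / (n : ℝ)) / 2 ^ k := by
        have := s0_norm
        gcongr
    _ = _ := by field_simp

lemma sqIter_mem (k : ℕ) : ∀ (E : B) (w : ℂ), ‖w‖ ≤ 1 → E.mem w → (sqIter E k).mem (w ^ (2 ^ k)) := by
  induction k with
  | zero => intro E w _ h; simpa [sqIter] using h
  | succ k ih =>
    intro E w hw h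
    rw [sqIter]
    have := ih _ (w * w) (by rw [norm_mul]; exact mul_le_one₀ hw (norm_nonneg _) hw) (B.mem_mulUnit h h hw)
    convert this using 1
    rw [← pow_two, ← pow_mul, pow_succ, mul_comm]

lemma qBall_mem (n K k J : ℕ) (hn : 1 ≤ n) (hk : 86 ≤ n * 2 ^ k) :
    (qBall n K k J).mem (Complex.exp (zz n 0)) ∧ ‖Complex.exp (zz n 0)‖ ≤ 1 := by
  have hre : ∀ k, ‖Complex.exp (zz n k)‖ ≤ 1 := by
    intro k
    rw [Complex.norm_exp]
    apply Real.exp_le_one_iff.mpr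
    have h0 : 0 ≤ Real.log (1 + 1 / (n : ℝ)) := Real.log_nonneg (by simp)
    have : zz n k = ((Real.log (1 + 1 / (n : ℝ)) / 2 ^ k : ℝ) : ℂ) * (-s0) := by
      unfold zz; push_cast; ring
    rw [this, Complex.re_ofReal_mul]
    apply mul_nonpos_of_nonneg_of_nonpos (by positivity)
    simp [s0]; norm_num
  refine ⟨?_, hre 0⟩
  have e : Complex.exp (zz n 0) = Complex.exp (zz n k) ^ (2 ^ k) := by
    rw [← Complex.exp_nat_mul]
    congr 1
    unfold zz
    push_cast
    field_simp
  rw [e]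
  unfold qBall
  apply sqIter_mem k _ _ (hre k)
  have hh := horner_mem (zBall_mem n K k hn) J _ _ B.mem_one
  apply B.mem_err hh
  rw [hornerC_eq, mul_one, ← Finset.sum_range_succ (f := fun m => zz n k ^ m / (m.factorial : ℂ))]
  set Y := n * 2 ^ k / 86 with hY
  have hY1 : 1 ≤ Y := by rw [hY]; omega
  have hY1' : (1 : ℝ) ≤ Y := by exact_mod_cast hY1
  have hY2 : (86 : ℝ) * Y ≤ n * 2 ^ k := by
    have : 86 * Y ≤ n * 2 ^ k := by rw [hY]; omega
    exact_mod_cast this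
  have hn' : (1 : ℝ) ≤ n := by exact_mod_cast hn
  have hz : ‖zz n k‖ ≤ 1 / Y := by
    refine (zz_norm n k hn).trans ?_
    rw [div_le_div_iff₀ (by positivity) (by positivity)]
    linarith
  have hz1 : ‖zz n k‖ ≤ 1 := hz.trans (by rw [div_le_one (by positivity)]; exact hY1')
  have hb := Complex.exp_bound' (x := zz n k) (n := J + 1) (by
    rw [div_le_iff₀ (by positivity)]
    push_cast
    have : (0 : ℝ) ≤ J := by positivity
    linarith)
  have h4 := nat_div_lt (2 * S) (Y ^ (J + 1) * (J + 1).factorial) (by positivity)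
  have hS := S_pos
  calc (S : ℝ) * _ ≤ S * (‖zz n k‖ ^ (J + 1) / ((J + 1).factorial) * 2) := by gcongr
    _ ≤ S * ((1 / Y) ^ (J + 1) / ((J + 1).factorial) * 2) := by gcongr
    _ = ((2 * S : ℕ) : ℝ) / ((Y ^ (J + 1) * (J + 1).factorial : ℕ) : ℝ) := by
        rw [one_div_pow]
        push_cast
        field_simp
    _ ≤ _ := by rw [Nat.cast_add, Nat.cast_one]; exact h4

/-- coefficient pattern at residues `1, 4` and at `2, 3` modulo five -/
noncomputable def e1 (n : ℕ) : ℂ := if n % 5 = 1 then 1 else if n % 5 = 4 then -1 else 0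
noncomputable def e2 (n : ℕ) : ℂ := if n % 5 = 2 then 1 else if n % 5 = 3 then -1 else 0

structure Good (s : St) : Prop where
  pos : 1 ≤ s.n
  L : s.L.mem (Real.log s.n : ℂ)
  v : s.v.mem ((s.n : ℂ) ^ (-s0))
  F1 : s.F1.mem (∑ m ∈ Finset.range s.n, e1 m * (m : ℂ) ^ (-s0))
  F2 : s.F2.mem (∑ m ∈ Finset.range s.n, e2 m * (m : ℂ) ^ (-s0))
  D1 : s.D1.mem (∑ m ∈ Finset.range s.n, e1 m * ((m : ℂ) ^ (-s0) * (Real.log m : ℂ)))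
  D2 : s.D2.mem (∑ m ∈ Finset.range s.n, e2 m * ((m : ℂ) ^ (-s0) * (Real.log m : ℂ)))

lemma acc_mem {F v : B} {f x : ℂ} (hF : F.mem f) (hv : v.mem x) (n i j : ℕ) :
    (if n % 5 = i then F.add v else if n % 5 = j then F.sub v else F).mem
      (f + (if n % 5 = i then 1 else if n % 5 = j then -1 else 0) * x) := by
  split_ifs
  · simpa using B.mem_add hF hv
  · simpa [sub_eq_add_neg] using B.mem_sub hF hv
  · simpa using hF

lemma upd_good (K k J : ℕ) (s : St) (h : Good s) (hk : 86 ≤ s.n * 2 ^ k) : Good (s.upd K k J) := by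
  have hn' : (1 : ℝ) ≤ s.n := by exact_mod_cast h.pos
  have hlog : Real.log ((s.n : ℝ) + 1) = Real.log s.n + Real.log (1 + 1 / (s.n : ℝ)) := by
    rw [← Real.log_mul (by positivity) (by positivity)]
    congr 1; field_simp
  have hvL : (s.v.mulDiv s.L 1).mem ((s.n : ℂ) ^ (-s0) * (Real.log s.n : ℂ)) := by
    simpa using B.mem_mulDiv h.v h.L 1 one_pos
  refine ⟨?_, ?_, ?_, ?_, ?_, ?_, ?_⟩
  · simp [St.upd]
  · simp only [St.upd, Nat.cast_add, Nat.cast_one, hlog]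
    rw [Complex.ofReal_add]
    apply B.mem_add h.L
    have := log_approx s.n K h.pos
    unfold B.mem
    rw [← Real.norm_eq_abs, ← Complex.norm_real] at this
    simpa using this
  · simp only [St.upd]
    obtain ⟨hq, hq1⟩ := qBall_mem s.n K k J h.pos hk
    have := B.mem_mulUnit h.v hq hq1
    convert this using 1
    rw [Complex.cpow_def_of_ne_zero (by exact_mod_cast Nat.succ_ne_zero s.n),
      Complex.cpow_def_of_ne_zero (by exact_mod_cast (by have := h.pos; omega)), ← Complex.exp_add,
      ← Complex.natCast_log, ← Complex.natCast_log]
    congr 1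
    unfold zz
    rw [Nat.cast_add, Nat.cast_one, hlog, Complex.ofReal_add]
    ring
  · simp only [St.upd, Finset.sum_range_succ]
    exact acc_mem h.F1 h.v _ _ _
  · simp only [St.upd, Finset.sum_range_succ]
    exact acc_mem h.F2 h.v _ _ _
  · simp only [St.upd, Finset.sum_range_succ]
    exact acc_mem h.D1 hvL _ _ _
  · simp only [St.upd, Finset.sum_range_succ]
    exact acc_mem h.D2 hvL _ _ _

lemma run_good (K k J m : ℕ) : ∀ (s : St), Good s → 86 ≤ s.n * 2 ^ k → Good (run K k J m s) := by
  induction m with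
  | zero => intro s h _; simpa [run] using h
  | succ m ih =>
    intro s h hk
    rw [run]
    apply ih _ (upd_good K k J s h hk)
    refine hk.trans (Nat.mul_le_mul_right _ ?_)
    simp [St.upd]

lemma B.eq_of_beq {a b : B} (h : a.beq b = true) : a = b := by
  cases a; cases b
  simp [B.beq] at h
  simp [h]

lemma St.eq_of_beq {a b : St} (h : a.beq b = true) : a = b := by
  cases a; cases b
  simp only [St.beq, Bool.and_eq_true, decide_eq_true_eq] at h
  obtain ⟨⟨⟨⟨⟨⟨h1, h2⟩, h3⟩, h4⟩, h5⟩, h6⟩, h7⟩ := h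
  simp only [h1, B.eq_of_beq h2, B.eq_of_beq h3, B.eq_of_beq h4, B.eq_of_beq h5, B.eq_of_beq h6, B.eq_of_beq h7]

lemma chunk {K k J m : ℕ} {s t : St} (h : Good s) (hk : Nat.ble 86 (s.n * 2 ^ k) = true)
    (he : (run K k J m s).beq t = true) : Good t := by
  rw [← St.eq_of_beq he]
  exact run_good K k J m s h (Nat.le_of_ble_eq_true hk)

lemma st0_good : Good st0 := by
  refine ⟨by simp [st0], ?_, ?_, ?_, ?_, ?_, ?_⟩ <;> simp [st0, B.mem, e1, e2]


def st1 : St :=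
  ⟨10, ⟨2302585092994045582, 0, 549⟩, ⟨-129112135953317324, -86502910099352232, 66960⟩,
    ⟨342915952066368405, -298634959988106143, 158227⟩, ⟨-1036451922616668526, -7568516656155241, 176266⟩,
    ⟨-1133799495635253547, -476370593375562515, 293019⟩, ⟨-967967298221551780, 241243093553343542, 291601⟩⟩

lemma st1_good : Good st1 :=
  chunk (K := 60) (k := 7) (J := 18) (m := 9) st0_good (by decide +kernel) (by decide +kernel)

def st2 : St :=
  ⟨100, ⟨4605170185988090829, 0, 2259⟩, ⟨9187190194770652, 22337150978210570, 123945⟩,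
    ⟨175163310290308007, 18386470880896395, 4391755⟩, ⟨-663659403794432953, -161767157203128853, 4410437⟩,
    ⟨-1405210309727747386, 245648095766203169, 16749523⟩, ⟨393757498562470730, -462597765465061425, 16753250⟩⟩

lemma st2_good : Good st2 :=
  chunk (K := 18) (k := 4) (J := 16) (m := 90) st1_good (by decide +kernel) (by decide +kernel)

def st3 : St :=
  ⟨200, ⟨5298317366548035761, 0, 3259⟩, ⟨-1407038352568926, -13718459010891315, 128077⟩,
    ⟨188020776389119936, 52334412812145744, 9445335⟩, ⟨-657948763150653175, -147950835913082463, 9463999⟩,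
    ⟨-1345775229233718086, 408783634787589298, 41986172⟩, ⟨420043260032944155, -396489693576323652, 41990143⟩⟩

lemma st3_good : Good st3 :=
  chunk (K := 9) (k := 0) (J := 17) (m := 100) st2_good (by decide +kernel) (by decide +kernel)

def st4 : St :=
  ⟨300, ⟨5703782474656199802, 0, 4159⟩, ⟨2867676229235637, 9513016971564026, 131194⟩,
    ⟨185182800510926751, 36941536984137222, 14644311⟩, ⟨-658943357485251833, -153336065576730546, 14663041⟩,
    ⟨-1361516169183999328, 324775142958182718, 70663620⟩, ⟨414538010747659350, -425863376563098277, 70667957⟩⟩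

lemma st4_good : Good st4 :=
  chunk (K := 8) (k := 0) (J := 13) (m := 100) st3_good (by decide +kernel) (by decide +kernel)

def st5 : St :=
  ⟨400, ⟨5991464547107980401, 0, 5059⟩, ⟨-1454495462597061, 7738392171150724, 132552⟩,
    ⟨187908672374523754, 38182649328594837, 19920368⟩, ⟨-658012047889808748, -152892013277104675, 19939096⟩,
    ⟨-1345715260991598900, 330479343517399017, 101555803⟩, ⟨419934678931747434, -423795467986382867, 101560197⟩⟩

lemma st5_good : Good st5 :=
  chunk (K := 8) (k := 0) (J := 13) (m := 100) st4_good (by decide +kernel) (by decide +kernel)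

def st6 : St :=
  ⟨500, ⟨6214608098422189856, 0, 5859⟩, ⟨577187372216348, 6548714345543758, 137698⟩,
    ⟨186657575312756154, 38965404428287811, 25371067⟩, ⟨-658434476393491269, -152619373178382656, 25389786⟩,
    ⟨-1353292206741166481, 334274186549463517, 134849495⟩, ⟨417376055999026784, -422463355406394055, 134853862⟩⟩

lemma st6_good : Good st6 :=
  chunk (K := 7) (k := 0) (J := 10) (m := 100) st5_good (by decide +kernel) (by decide +kernel)

def st7 : St :=
  ⟨600, ⟨6396929655216144181, 0, 6659⟩, ⟨-27149477475832, -5672989831778486, 138805⟩,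
    ⟨187031291939726629, 46423423899640933, 30903565⟩, ⟨-658308023261543173, -150112371844722413, 30922290⟩,
    ⟨-1350969391691584051, 381252205590233968, 169754149⟩, ⟨418161567327965335, -406672070168778893, 169758539⟩⟩

lemma st7_good : Good st7 :=
  chunk (K := 7) (k := 0) (J := 10) (m := 100) st6_good (by decide +kernel) (by decide +kernel)

def st8 : St :=
  ⟨700, ⟨6551080335043402183, 0, 7459⟩, ⟨-3027071070016185, -3989961860732754, 139607⟩,
    ⟨188848610750448238, 45390308304870376, 36472192⟩, ⟨-657699345821869880, -150460658076641735, 36490918⟩,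
    ⟨-1339060670307114060, 375016520520559741, 205818913⟩, ⟨422150305859380985, -408774993799017167, 205823319⟩⟩

lemma st8_good : Good st8 :=
  chunk (K := 7) (k := 0) (J := 10) (m := 100) st7_good (by decide +kernel) (by decide +kernel)

def st9 : St :=
  ⟨800, ⟨6684611727667924510, 0, 8259⟩, ⟨2051236189763822, -4000521364029697, 140329⟩,
    ⟨185773652410313996, 45391862533627058, 42071203⟩, ⟨-658729014236982123, -150460942297315369, 42089925⟩,
    ⟨-1359370377953718575, 375349071200820448, 242882946⟩, ⟨415349551236822729, -408669090305362560, 242887335⟩⟩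

lemma st9_good : Good st9 :=
  chunk (K := 7) (k := 0) (J := 10) (m := 100) st8_good (by decide +kernel) (by decide +kernel)

def st10 : St :=
  ⟨900, ⟨6802394763324307678, 0, 9059⟩, ⟨793447918809264, 4009619757356616, 140995⟩,
    ⟨186533884801882888, 40552461795846828, 47697750⟩, ⟨-658474674625440754, -152079646214174676, 47716473⟩,
    ⟨-1354344206147063473, 342714628049942633, 280834323⟩, ⟨417031215565746575, -419584735720282828, 280838734⟩⟩

lemma st10_good : Good st10 :=
  chunk (K := 7) (k := 0) (J := 10) (m := 100) st9_good (by decide +kernel) (by decide +kernel)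

def st11 : St :=
  ⟨1000, ⟨6907755278982133712, 0, 9859⟩, ⟨746050813488281, -3678715961392274, 141631⟩,
    ⟨186563803414023596, 45190916423659189, 53350439⟩, ⟨-658464453372629393, -150529241935124356, 53369159⟩,
    ⟨-1354188644541035462, 374500958945361857, 319591374⟩, ⟨417084626155416113, -408960166707173763, 319595780⟩⟩

lemma st11_good : Good st11 :=
  chunk (K := 7) (k := 0) (J := 10) (m := 100) st10_good (by decide +kernel) (by decide +kernel)

def st12 : St :=
  ⟨1100, ⟨7003065458786458317, 0, 10559⟩, ⟨-3452677722575640, 395145712547006, 212343⟩,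
    ⟨189093289143581019, 42734455274506753, 60676538⟩, ⟨-657619580473243861, -151350090975070973, 60695873⟩,
    ⟨-1336517050987844960, 357509857465953524, 370576221⟩, ⟨422987156881396003, -414637859272948604, 370584856⟩⟩

lemma st12_good : Good st12 :=
  chunk (K := 6) (k := 0) (J := 7) (m := 100) st11_good (by decide +kernel) (by decide +kernel)

def st13 : St :=
  ⟨1200, ⟨7090076835776087824, 0, 11259⟩, ⟨-905150448442259, 3110096218755237, 243433⟩,
    ⟨187558046148390284, 41100286516571171, 69869196⟩, ⟨-658132451463071926, -151895681404500989, 69888725⟩,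
    ⟨-1347220935021531339, 345902584048063586, 435369026⟩, ⟨419411373587312908, -418513144953823785, 435379013⟩⟩

lemma st13_good : Good st13 :=
  chunk (K := 6) (k := 0) (J := 7) (m := 100) st12_good (by decide +kernel) (by decide +kernel)

def st14 : St :=
  ⟨1300, ⟨7170119543449623993, 0, 11959⟩, ⟨877527595674423, 2906571026080295, 257140⟩,
    ⟨186485098250435125, 41223804225198351, 79900396⟩, ⟨-658490658353235024, -151854274461365068, 79919935⟩,
    ⟨-1354870528439093723, 346638263875353271, 506903449⟩, ⟨416857527927738988, -418266336793238217, 506913506⟩⟩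

lemma st14_good : Good st14 :=
  chunk (K := 6) (k := 0) (J := 7) (m := 100) st13_good (by decide +kernel) (by decide +kernel)

def st15 : St :=
  ⟨1400, ⟨7244227515603345622, 0, 12659⟩, ⟨1010108538154288, 2675228477670771, 264210⟩,
    ⟨186405593994658605, 41363656167135973, 90340742⟩, ⟨-658517152301255394, -151807482403643599, 90360285⟩,
    ⟨-1355485643828576557, 347521771916720829, 582157366⟩, ⟨416652518634009752, -417970630170057585, 582167459⟩⟩

lemma st15_good : Good st15 :=
  chunk (K := 6) (k := 0) (J := 7) (m := 100) st14_good (by decide +kernel) (by decide +kernel)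

def st16 : St :=
  ⟨1500, ⟨7313220387090296818, 0, 13359⟩, ⟨-25723839702525, 2704307028878399, 268225⟩,
    ⟨187028659120759039, 41346642300587462, 100997940⟩, ⟨-658309202668103026, -151813081338100386, 101017502⟩,
    ⟨-1350970969322981231, 347286365193631762, 659735285⟩, ⟨418159300088706808, -418048609561367970, 659745524⟩⟩

lemma st16_good : Good st16 :=
  chunk (K := 6) (k := 0) (J := 7) (m := 100) st15_good (by decide +kernel) (by decide +kernel)

def st17 : St :=
  ⟨1600, ⟨7377758908227867740, 0, 14059⟩, ⟨-1771736667133751, 1857438070222058, 270621⟩,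
    ⟨188078312621596730, 41856104689297881, 111779499⟩, ⟨-657958976885413866, -151643036800329740, 111799068⟩,
    ⟨-1343225919674930224, 350940155666089441, 738937311⟩, ⟨420743495034576182, -416829058885300987, 738947605⟩⟩

lemma st17_good : Good st17 :=
  chunk (K := 6) (k := 0) (J := 7) (m := 100) st16_good (by decide +kernel) (by decide +kernel)

def st18 : St :=
  ⟨1700, ⟨7438383530044302330, 0, 14759⟩, ⟨-2349841802061772, -672366369197320, 272193⟩,
    ⟨188425617758669015, 43376795747752349, 122638135⟩, ⟨-657843134776112029, -151135671324386519, 122657706⟩,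
    ⟨-1340578030655274041, 362183951213235205, 819384437⟩, ⟨421626682087369196, -413077663143827371, 819394759⟩⟩

lemma st18_good : Good st18 :=
  chunk (K := 6) (k := 0) (J := 7) (m := 100) st17_good (by decide +kernel) (by decide +kernel)

def st19 : St :=
  ⟨1800, ⟨7495541943884250699, 0, 15459⟩, ⟨215882363299289, -2323753837577100, 273282⟩,
    ⟨186883639027801580, 44369132672487928, 133548482⟩, ⟨-658357552033650273, -150804641422014330, 133568051⟩,
    ⟨-1352055305297087971, 369645088032727321, 900856699⟩, ⟨417797760449323069, -410588740888163915, 900867009⟩⟩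

lemma st19_good : Good st19 :=
  chunk (K := 6) (k := 0) (J := 7) (m := 100) st18_good (by decide +kernel) (by decide +kernel)

def st20 : St :=
  ⟨1900, ⟨7549609165154526220, 0, 16159⟩, ⟨2201167244569348, 381244989706378, 274106⟩,
    ⟨185690796746668743, 42743762239191504, 144496516⟩, ⟨-658755444874968509, -151346827008411522, 144516087⟩,
    ⟨-1361067752719521938, 357449636038394829, 983218870⟩, ⟨414791515033823944, -414656864284393458, 983229200⟩⟩

lemma st20_good : Good st20 :=
  chunk (K := 6) (k := 0) (J := 7) (m := 100) st19_good (by decide +kernel) (by decide +kernel)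

def st21 : St :=
  ⟨2000, ⟨7600902459542076505, 0, 16859⟩, ⟨-1005020899442965, 1892932456983010, 274759⟩,
    ⟨187617008490518238, 41835591227349887, 155474051⟩, ⟨-658112957578446291, -151649743890444563, 155493621⟩,
    ⟨-1346494614502211921, 350535029245691040, 1066380964⟩, ⟨419652384132008101, -416963194173778487, 1066391293⟩⟩

lemma st21_good : Good st21 :=
  chunk (K := 6) (k := 0) (J := 7) (m := 100) st20_good (by decide +kernel) (by decide +kernel)


/-! ### Taylor expansion of `x ^ (-s)` -/

noncomputable def poch (s : ℂ) (K : ℕ) : ℂ := ∏ j ∈ Finset.range K, (s + (j : ℂ))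

lemma poch_succ' (s : ℂ) (K : ℕ) : poch s (K + 1) = s * poch (s + 1) K := by
  unfold poch
  rw [Finset.prod_range_succ']
  simp only [Nat.cast_zero, add_zero]
  rw [mul_comm]
  congr 1
  apply Finset.prod_congr rfl
  intro j _
  push_cast
  ring

noncomputable def tayR (K : ℕ) (s : ℂ) (x h : ℝ) : ℂ :=
  ((x + h : ℝ) : ℂ) ^ (-s) - ∑ j ∈ Finset.range K,
    (-1) ^ j * poch s j / (j.factorial : ℂ) * (x : ℂ) ^ (-(s + j)) * (h : ℂ) ^ j

lemma tayR_deriv (K : ℕ) (s : ℂ) (x h : ℝ) (hx : 0 < x) (hh : 0 ≤ h) :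
    HasDerivAt (fun h : ℝ => tayR (K + 1) s x h) (-s * tayR K (s + 1) x h) h := by
  unfold tayR
  have h1 : HasDerivAt (fun h : ℝ => ((x + h : ℝ) : ℂ) ^ (-s)) (-s * ((x + h : ℝ) : ℂ) ^ (-(s + 1))) h := by
    have hs : (x : ℂ) + (h : ℂ) ∈ Complex.slitPlane := by
      rw [← Complex.ofReal_add, Complex.ofReal_mem_slitPlane]; linarith
    have hc := (((hasDerivAt_id (h : ℂ)).const_add (x : ℂ)).cpow_const (c := -s) hs).comp_ofReal
    simp only [Complex.ofReal_add]
    refine hc.congr_deriv ?_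
    simp only [id, mul_one]
    congr 2
    ring
  have h2 : ∀ i : ℕ, HasDerivAt (fun h : ℝ => (-1) ^ i * poch s i / (i.factorial : ℂ) * (x : ℂ) ^ (-(s + i)) * (h : ℂ) ^ i)
      ((-1) ^ i * poch s i / (i.factorial : ℂ) * (x : ℂ) ^ (-(s + i)) * (i * (h : ℂ) ^ (i - 1))) h := by
    intro i
    apply HasDerivAt.const_mul
    exact (hasDerivAt_pow i (h : ℂ)).comp_ofReal
  have h3 := h1.sub (HasDerivAt.fun_sum (u := Finset.range (K + 1)) (fun i _ => h2 i))
  refine h3.congr_deriv ?_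
  symm
  rw [Finset.sum_range_succ', mul_sub, Finset.mul_sum]
  congr 1
  simp only [Nat.cast_zero, zero_mul, mul_zero, add_zero]
  apply Finset.sum_congr rfl
  intro i _
  rw [poch_succ', Nat.factorial_succ]
  have e : -(s + 1 + (i : ℂ)) = -(s + ((i + 1 : ℕ) : ℂ)) := by push_cast; ring
  rw [e]
  have hf : (i.factorial : ℂ) ≠ 0 := by exact_mod_cast i.factorial_ne_zero
  have hi : ((i : ℂ) + 1) ≠ 0 := by exact_mod_cast Nat.succ_ne_zero i
  simp only [Nat.add_sub_cancel]
  push_cast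
  field_simp
  ring

lemma tayR_zero (K : ℕ) (s : ℂ) (x : ℝ) : tayR (K + 1) s x 0 = 0 := by
  unfold tayR
  rw [Finset.sum_range_succ']
  simp [poch]

lemma tayR_bound (K : ℕ) : ∀ (s : ℂ) (x h : ℝ), 0 ≤ s.re → 0 < x → 0 ≤ h →
    ‖tayR K s x h‖ ≤ ‖poch s K‖ * x ^ (-(s.re + K)) * (h ^ K / K.factorial) := by
  induction K with
  | zero =>
    intro s x h hs hx hh
    simp only [tayR, poch, Finset.range_zero, Finset.sum_empty, Finset.prod_empty, sub_zero,
      Nat.cast_zero, add_zero, norm_one, one_mul, pow_zero, Nat.factorial_zero, Nat.cast_one, div_one, mul_one]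
    rw [Complex.norm_cpow_eq_rpow_re_of_pos (by linarith), Complex.neg_re]
    exact Real.rpow_le_rpow_of_nonpos hx (by linarith) (by linarith)
  | succ K ih =>
    intro s x h hs hx hh
    set C := ‖poch s (K + 1)‖ * x ^ (-(s.re + ((K + 1 : ℕ) : ℝ))) with hC
    have key := image_norm_le_of_norm_deriv_right_le_deriv_boundary (a := 0) (b := h)
      (f := fun h : ℝ => tayR (K + 1) s x h) (f' := fun h => -s * tayR K (s + 1) x h)
      (B := fun h => C * (h ^ (K + 1) / ((K + 1).factorial : ℝ)))
      (B' := fun h => C * (h ^ K / (K.factorial : ℝ)))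
      (fun y hy => (tayR_deriv K s x y hx hy.1).continuousAt.continuousWithinAt)
      (fun y hy => (tayR_deriv K s x y hx hy.1).hasDerivWithinAt)
      (by simp [tayR_zero])
      (by
        intro y
        apply HasDerivAt.const_mul
        have := (hasDerivAt_pow (K + 1) y).div_const ((K + 1).factorial : ℝ)
        convert this using 1
        rw [Nat.factorial_succ]
        have hf : (K.factorial : ℝ) ≠ 0 := by exact_mod_cast K.factorial_ne_zero
        push_cast
        field_simp)
      (by
        intro y hy
        have := ih (s + 1) x y (by simp; linarith) hx hy.1
        rw [norm_mul, norm_neg]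
        calc ‖s‖ * ‖tayR K (s + 1) x y‖ ≤ ‖s‖ * (‖poch (s + 1) K‖ * x ^ (-((s + 1).re + K)) * (y ^ K / K.factorial)) := by
              gcongr
          _ = C * (y ^ K / (K.factorial : ℝ)) := by
              rw [hC, poch_succ', norm_mul]
              have e : -((s + 1).re + (K : ℝ)) = -(s.re + ((K + 1 : ℕ) : ℝ)) := by
                push_cast; simp; ring
              rw [e]
              ring)
    exact key ⟨hh, le_refl h⟩

/-! ### Block error -/

noncomputable def TT (κ : ℝ) (s : ℂ) (y : ℝ) : ℂ :=
  (3 + (κ : ℂ)) / 5 * (y : ℂ) ^ (-s) - (2 + (κ : ℂ)) / 5 * (s * (s + 1)) * (y : ℂ) ^ (-(s + 2))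

noncomputable def Eb (κ : ℝ) (s : ℂ) (y : ℝ) : ℂ :=
  ((y + 1 : ℝ) : ℂ) ^ (-s) + κ * ((y + 2 : ℝ) : ℂ) ^ (-s) - κ * ((y + 3 : ℝ) : ℂ) ^ (-s)
    - ((y + 4 : ℝ) : ℂ) ^ (-s) - (TT κ s y - TT κ s (y + 5))

lemma Eb_eq (κ : ℝ) (s : ℂ) (y : ℝ) : Eb κ s y =
    tayR 5 s y 1 + κ * tayR 5 s y 2 - κ * tayR 5 s y 3 - tayR 5 s y 4
      + (3 + (κ : ℂ)) / 5 * tayR 5 s y 5 - (2 + (κ : ℂ)) / 5 * (s * (s + 1)) * tayR 3 (s + 2) y 5 := by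
  unfold Eb TT tayR poch
  have a0 : -(s + 2 + ((0 : ℕ) : ℂ)) = -(s + 2) := by push_cast; ring
  have a1 : -(s + 2 + ((1 : ℕ) : ℂ)) = -(s + 3) := by push_cast; ring
  have a2 : -(s + 2 + ((2 : ℕ) : ℂ)) = -(s + 4) := by push_cast; ring
  have b0 : -(s + ((0 : ℕ) : ℂ)) = -s := by push_cast; ring
  simp only [Finset.sum_range_succ, Finset.sum_range_zero, Finset.prod_range_succ, Finset.prod_range_zero,
    a0, a1, a2, b0]
  norm_num [Nat.factorial]
  ring

lemma Eb_bound (κ : ℝ) (h0 : 0 ≤ κ) (h1 : κ ≤ 0.285) (s : ℂ) (y : ℝ) (hs : 0 ≤ s.re) (hy : 0 < y) :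
    ‖Eb κ s y‖ ≤ 36 * ‖poch s 5‖ * y ^ (-(s.re + 5)) := by
  rw [Eb_eq]
  have c1 := tayR_bound 5 s y 1 hs hy (by norm_num)
  have c2 := tayR_bound 5 s y 2 hs hy (by norm_num)
  have c3 := tayR_bound 5 s y 3 hs hy (by norm_num)
  have c4 := tayR_bound 5 s y 4 hs hy (by norm_num)
  have c5 := tayR_bound 5 s y 5 hs hy (by norm_num)
  have c6 := tayR_bound 3 (s + 2) y 5 (by simp; linarith) hy (by norm_num)
  have e6 : ‖s * (s + 1)‖ * ‖poch (s + 2) 3‖ = ‖poch s 5‖ := by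
    rw [← norm_mul]; congr 1
    simp only [poch, Finset.prod_range_succ, Finset.prod_range_zero]
    push_cast
    ring
  have e7 : -((s + 2).re + ((3 : ℕ) : ℝ)) = -(s.re + 5) := by
    simp; ring
  rw [e7] at c6
  have e8 : ((5 : ℕ) : ℝ) = 5 := by norm_num
  rw [e8] at c1 c2 c3 c4 c5
  have hW : 0 ≤ ‖poch s 5‖ * y ^ (-(s.re + 5)) := by positivity
  have c7 : ‖s * (s + 1)‖ * ‖tayR 3 (s + 2) y 5‖ ≤ ‖poch s 5‖ * y ^ (-(s.re + 5)) * (5 ^ 3 / (3 : ℕ).factorial) := by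
    rw [← e6]
    calc _ ≤ ‖s * (s + 1)‖ * (‖poch (s + 2) 3‖ * y ^ (-(s.re + 5)) * (5 ^ 3 / (3 : ℕ).factorial)) := by gcongr
      _ = _ := by ring
  norm_num [Nat.factorial] at c1 c2 c3 c4 c5 c7
  set W := ‖poch s 5‖ * y ^ (-(s.re + 5)) with hWd
  have e9 : y ^ (-5 + -s.re) = y ^ (-(s.re + 5)) := by congr 1; ring
  try rw [e9] at c1 c2 c3 c4 c5 c7
  rw [← hWd] at c1 c2 c3 c4 c5 c7
  have n1 : ‖(κ : ℂ)‖ = κ := by rw [Complex.norm_real, Real.norm_eq_abs, abs_of_nonneg h0]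
  have n2 : ‖(3 + (κ : ℂ)) / 5‖ = (3 + κ) / 5 := by
    have : (3 + (κ : ℂ)) / 5 = (((3 + κ) / 5 : ℝ) : ℂ) := by push_cast; ring
    rw [this, Complex.norm_real, Real.norm_eq_abs, abs_of_nonneg (by positivity)]
  have n3 : ‖(2 + (κ : ℂ)) / 5‖ = (2 + κ) / 5 := by
    have : (2 + (κ : ℂ)) / 5 = (((2 + κ) / 5 : ℝ) : ℂ) := by push_cast; ring
    rw [this, Complex.norm_real, Real.norm_eq_abs, abs_of_nonneg (by positivity)]
  calc _ ≤ ‖tayR 5 s y 1‖ + ‖(κ : ℂ) * tayR 5 s y 2‖ + ‖(κ : ℂ) * tayR 5 s y 3‖ + ‖tayR 5 s y 4‖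
        + ‖(3 + (κ : ℂ)) / 5 * tayR 5 s y 5‖ + ‖(2 + (κ : ℂ)) / 5 * (s * (s + 1)) * tayR 3 (s + 2) y 5‖ := by
        refine (norm_sub_le _ _).trans (add_le_add ?_ le_rfl)
        refine (norm_add_le _ _).trans (add_le_add ?_ le_rfl)
        refine (norm_sub_le _ _).trans (add_le_add ?_ le_rfl)
        refine (norm_sub_le _ _).trans (add_le_add ?_ le_rfl)
        exact norm_add_le _ _
    _ = ‖tayR 5 s y 1‖ + κ * ‖tayR 5 s y 2‖ + κ * ‖tayR 5 s y 3‖ + ‖tayR 5 s y 4‖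
        + (3 + κ) / 5 * ‖tayR 5 s y 5‖ + (2 + κ) / 5 * (‖s * (s + 1)‖ * ‖tayR 3 (s + 2) y 5‖) := by
        rw [norm_mul, norm_mul, norm_mul ((3 + (κ : ℂ)) / 5), mul_assoc ((2 + (κ : ℂ)) / 5), norm_mul ((2 + (κ : ℂ)) / 5),
          norm_mul (s * (s + 1)), n1, n2, n3]
    _ ≤ W * (1 / 120) + 0.285 * (W * (32 / 120)) + 0.285 * (W * (243 / 120)) + W * (1024 / 120)
        + (3 + 0.285) / 5 * (W * (3125 / 120)) + (2 + 0.285) / 5 * (W * (125 / 6)) := by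
        have c7' : ‖s * (s + 1)‖ * ‖tayR 3 (s + 2) y 5‖ ≤ W * (125 / 6) := by rw [norm_mul]; linarith
        have q2 : ‖tayR 5 s y 2‖ ≤ W * (32 / 120) := by linarith
        have q3 : ‖tayR 5 s y 3‖ ≤ W * (243 / 120) := by linarith
        have q5 : ‖tayR 5 s y 5‖ ≤ W * (3125 / 120) := by linarith
        gcongr
        linarith
    _ ≤ 36 * ‖poch s 5‖ * y ^ (-(s.re + 5)) := by
        rw [mul_assoc 36, ← hWd]; nlinarith


/-! ### Analytic continuation -/

lemma char_vals (X : DirichletCharacter ℂ 5) (hX : X 2 = Complex.I) (n : ℕ) (κ : ℝ) :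
    (1 - Complex.I * κ) / 2 * X n + (1 + Complex.I * κ) / 2 * (X.ringHomComp (starRingEnd ℂ)) n
      = e1 n + κ * e2 n := by
  have h4 : X 4 = -1 := by
    have : (4 : ZMod 5) = 2 * 2 := by decide
    rw [this, map_mul, hX, Complex.I_mul_I]
  have h3 : X 3 = -Complex.I := by
    have : (3 : ZMod 5) = 4 * 2 := by decide
    rw [this, map_mul, h4, hX]; ring
  have h0 : X 0 = 0 := MulChar.map_nonunit X (by decide)
  have hn : (n : ZMod 5) = ((n % 5 : ℕ) : ZMod 5) := by simp
  rw [hn, MulChar.ringHomComp_apply]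
  unfold e1 e2
  have hlt : n % 5 < 5 := Nat.mod_lt _ (by norm_num)
  generalize n % 5 = r at hlt
  interval_cases r
  · simp [h0]
  · simp; ring
  · simp [hX]; ring_nf; simp
  · simp [h3]; ring_nf; simp
  · simp [h4]; ring

noncomputable def cc (κ : ℝ) (n : ℕ) : ℂ := e1 n + κ * e2 n

lemma dh_tendsto (X : DirichletCharacter ℂ 5) (hX : X 2 = Complex.I) (s : ℂ) (hs : 1 < s.re) :
    Filter.Tendsto (fun M : ℕ => ∑ n ∈ Finset.range M, cc dhKappa n * (n : ℂ) ^ (-s)) Filter.atTop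
      (nhds (dhFunction X s)) := by
  have h1 := (DirichletCharacter.LSeriesSummable_of_one_lt_re X hs).hasSum
  have h2 := (DirichletCharacter.LSeriesSummable_of_one_lt_re (X.ringHomComp (starRingEnd ℂ)) hs).hasSum
  have h3 := (h1.mul_left ((1 - Complex.I * dhKappa) / 2)).add (h2.mul_left ((1 + Complex.I * dhKappa) / 2))
  have h4 := h3.tendsto_sum_nat
  unfold dhFunction
  rw [DirichletCharacter.LFunction_eq_LSeries X hs, DirichletCharacter.LFunction_eq_LSeries _ hs]
  refine h4.congr ?_
  intro M
  apply Finset.sum_congr rfl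
  intro n _
  unfold cc
  rw [← char_vals X hX n]
  have hX0 : X 0 = 0 := MulChar.map_nonunit X (by decide)
  rcases Nat.eq_zero_or_pos n with h | h
  · subst h; simp [hX0]
  · rw [LSeries.term_of_ne_zero h.ne', LSeries.term_of_ne_zero h.ne', Complex.cpow_neg]
    ring

lemma partial_sum (κ : ℝ) (s : ℂ) (M k : ℕ) :
    ∑ n ∈ Finset.range (5 * (M + k)), cc κ n * (n : ℂ) ^ (-s) =
      ∑ n ∈ Finset.range (5 * M), cc κ n * (n : ℂ) ^ (-s) + TT κ s ((5 * M : ℕ) : ℝ)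
        - TT κ s ((5 * (M + k) : ℕ) : ℝ) + ∑ i ∈ Finset.range k, Eb κ s ((5 * (M + i) : ℕ) : ℝ) := by
  induction k with
  | zero => simp
  | succ k ih =>
    have e : 5 * (M + (k + 1)) = 5 * (M + k) + 1 + 1 + 1 + 1 + 1 := by ring
    rw [e]
    simp only [Finset.sum_range_succ]
    rw [ih]
    set y := 5 * (M + k) with hy
    have c0 : cc κ y = 0 := by
      have : y % 5 = 0 := by omega
      simp [cc, e1, e2, this]
    have c1 : cc κ (y + 1) = 1 := by
      have : (y + 1) % 5 = 1 := by omega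
      simp [cc, e1, e2, this]
    have c2 : cc κ (y + 1 + 1) = κ := by
      have : (y + 1 + 1) % 5 = 2 := by omega
      simp [cc, e1, e2, this]
    have c3 : cc κ (y + 1 + 1 + 1) = -κ := by
      have : (y + 1 + 1 + 1) % 5 = 3 := by omega
      simp [cc, e1, e2, this]
    have c4 : cc κ (y + 1 + 1 + 1 + 1) = -1 := by
      have : (y + 1 + 1 + 1 + 1) % 5 = 4 := by omega
      simp [cc, e1, e2, this]
    rw [c0, c1, c2, c3, c4]
    unfold Eb
    have e5 : ((y + 1 + 1 + 1 + 1 + 1 : ℕ) : ℝ) = (y : ℝ) + 5 := by push_cast; ring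
    have f1 : (((y : ℝ) + 1 : ℝ) : ℂ) = ((y + 1 : ℕ) : ℂ) := by push_cast; ring
    have f2 : (((y : ℝ) + 2 : ℝ) : ℂ) = ((y + 1 + 1 : ℕ) : ℂ) := by push_cast; ring
    have f3 : (((y : ℝ) + 3 : ℝ) : ℂ) = ((y + 1 + 1 + 1 : ℕ) : ℂ) := by push_cast; ring
    have f4 : (((y : ℝ) + 4 : ℝ) : ℂ) = ((y + 1 + 1 + 1 + 1 : ℕ) : ℂ) := by push_cast; ring
    rw [e5, f1, f2, f3, f4]
    ring

lemma TT_tendsto (κ : ℝ) (s : ℂ) (hs : 0 < s.re) :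
    Filter.Tendsto (fun y : ℝ => TT κ s y) Filter.atTop (nhds 0) := by
  have key : ∀ w : ℂ, 0 < w.re → Filter.Tendsto (fun y : ℝ => (y : ℂ) ^ (-w)) Filter.atTop (nhds 0) := by
    intro w hw
    rw [tendsto_zero_iff_norm_tendsto_zero]
    refine (tendsto_rpow_neg_atTop hw).congr' ?_
    filter_upwards [Filter.eventually_gt_atTop 0] with y hy
    rw [Complex.norm_cpow_eq_rpow_re_of_pos hy, Complex.neg_re]
  unfold TT
  have h1 := (key s hs).const_mul ((3 + (κ : ℂ)) / 5)
  have h2 := (key (s + 2) (by simp; linarith)).const_mul ((2 + (κ : ℂ)) / 5 * (s * (s + 1)))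
  simpa using h1.sub h2

def UU : Set ℂ := {s | 0 < s.re} ∩ Metric.ball 0 100

lemma poch_bound (s : ℂ) (b : ℝ) (h : ‖s‖ + 4 ≤ b) : ‖poch s 5‖ ≤ b ^ 5 := by
  unfold poch
  rw [norm_prod]
  calc _ ≤ ∏ _i ∈ Finset.range 5, b := by
        apply Finset.prod_le_prod
        · intros; positivity
        · intro i hi
          have : (i : ℝ) ≤ 4 := by
            have := Finset.mem_range.mp hi
            exact_mod_cast (by omega : i ≤ 4)
          refine (norm_add_le _ _).trans ?_
          rw [Complex.norm_natCast]
          linarith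
    _ = b ^ 5 := by simp

lemma pow_split (σ : ℝ) (y : ℝ) (hσ : 0 ≤ σ) (hy : 1 ≤ y) : y ^ (-(σ + 5)) ≤ 1 / y ^ 5 := by
  have : y ^ (-(σ + 5)) ≤ y ^ (-(5 : ℝ)) := Real.rpow_le_rpow_of_exponent_le hy (by linarith)
  refine this.trans (le_of_eq ?_)
  rw [Real.rpow_neg (by linarith), one_div]
  congr 1
  exact_mod_cast Real.rpow_natCast y 5

lemma summable_inv5 (M : ℕ) : Summable (fun i : ℕ => 1 / ((5 * (M + i) : ℕ) : ℝ) ^ 5) := by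
  have h := (Real.summable_one_div_nat_pow (p := 5)).mpr (by norm_num)
  exact h.comp_injective (i := fun i => 5 * (M + i)) (by intro a b hab; simpa using hab)

lemma Eb_bound_UU (κ : ℝ) (h0 : 0 ≤ κ) (h1 : κ ≤ 0.285) (M i : ℕ) (hM : 1 ≤ M) (s : ℂ) (hs : s ∈ UU) :
    ‖Eb κ s ((5 * (M + i) : ℕ) : ℝ)‖ ≤ 36 * 104 ^ 5 * (1 / ((5 * (M + i) : ℕ) : ℝ) ^ 5) := by
  have hy : (1 : ℝ) ≤ ((5 * (M + i) : ℕ) : ℝ) := by exact_mod_cast (by omega)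
  obtain ⟨ha, hb⟩ := hs
  have hb' : ‖s‖ < 100 := by simpa using hb
  have ha' : 0 < s.re := ha
  have hp := poch_bound s 104 (by linarith)
  have hq := pow_split s.re _ ha'.le hy
  refine (Eb_bound κ h0 h1 s _ ha'.le (by linarith)).trans ?_
  gcongr

lemma rep_one (X : DirichletCharacter ℂ 5) (hX : X 2 = Complex.I) (h0 : 0 ≤ dhKappa) (h1 : dhKappa ≤ 0.285)
    (M : ℕ) (hM : 1 ≤ M) (s : ℂ) (hs : s ∈ UU) (hs1 : 1 < s.re) :
    dhFunction X s = ∑ n ∈ Finset.range (5 * M), cc dhKappa n * (n : ℂ) ^ (-s) + TT dhKappa s ((5 * M : ℕ) : ℝ)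
      + ∑' i : ℕ, Eb dhKappa s ((5 * (M + i) : ℕ) : ℝ) := by
  have t1 : Filter.Tendsto (fun k : ℕ => 5 * (M + k)) Filter.atTop Filter.atTop := by
    apply Filter.tendsto_atTop_mono (f := fun k => k) (fun k => by omega) Filter.tendsto_id
  have t2 := (dh_tendsto X hX s hs1).comp t1
  have hsum : Summable (fun i : ℕ => Eb dhKappa s ((5 * (M + i) : ℕ) : ℝ)) :=
    Summable.of_norm_bounded ((summable_inv5 M).mul_left (36 * 104 ^ 5)) (fun i => Eb_bound_UU _ h0 h1 M i hM s hs)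
  have t3 := hsum.hasSum.tendsto_sum_nat
  have t4 := (TT_tendsto dhKappa s hs.1).comp (tendsto_natCast_atTop_atTop.comp t1)
  have t5 := ((tendsto_const_nhds (x := ∑ n ∈ Finset.range (5 * M), cc dhKappa n * (n : ℂ) ^ (-s)
    + TT dhKappa s ((5 * M : ℕ) : ℝ)) (f := Filter.atTop)).sub t4).add t3
  rw [sub_zero] at t5
  refine tendsto_nhds_unique t2 (t5.congr ?_)
  intro k
  exact (partial_sum dhKappa s M k).symm

lemma diff_pow (y : ℝ) (hy : 0 < y) : Differentiable ℂ (fun s : ℂ => (y : ℂ) ^ (-s)) := by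
  intro s
  exact (differentiableAt_id.neg).const_cpow (Or.inl (by exact_mod_cast hy.ne'))

lemma diff_TT (κ y : ℝ) (hy : 0 < y) : Differentiable ℂ (fun s : ℂ => TT κ s y) := by
  unfold TT
  have h1 := diff_pow y hy
  have h2 : Differentiable ℂ (fun s : ℂ => (y : ℂ) ^ (-(s + 2))) :=
    h1.comp (differentiable_id.add_const 2)
  fun_prop

lemma diff_Eb (κ y : ℝ) (hy : 0 < y) : Differentiable ℂ (fun s : ℂ => Eb κ s y) := by
  unfold Eb
  have a1 := diff_pow (y + 1) (by linarith)
  have a2 := diff_pow (y + 2) (by linarith)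
  have a3 := diff_pow (y + 3) (by linarith)
  have a4 := diff_pow (y + 4) (by linarith)
  have a5 := diff_TT κ y hy
  have a6 := diff_TT κ (y + 5) (by linarith)
  fun_prop

lemma diff_sum (κ : ℝ) (N : ℕ) : Differentiable ℂ (fun s : ℂ => ∑ n ∈ Finset.range N, cc κ n * (n : ℂ) ^ (-s)) := by
  apply Differentiable.fun_sum
  intro n _
  rcases Nat.eq_zero_or_pos n with h | h
  · subst h
    have : (fun s : ℂ => cc κ 0 * ((0 : ℕ) : ℂ) ^ (-s)) = fun _ => 0 := by
      funext s; simp [cc, e1, e2]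
    rw [this]
    exact differentiable_const _
  · have := diff_pow n (by exact_mod_cast h)
    simp only [Complex.ofReal_natCast] at this
    exact this.const_mul _

lemma diff_dh (X : DirichletCharacter ℂ 5) (hX : X 2 = Complex.I) : Differentiable ℂ (dhFunction X) := by
  have hne : X ≠ 1 := by
    intro h
    rw [h] at hX
    have h2 : IsUnit (2 : ZMod 5) := by decide
    rw [MulChar.one_apply h2] at hX
    have := congrArg Complex.re hX
    simp at this
  have hne2 : X.ringHomComp (starRingEnd ℂ) ≠ 1 := by
    intro h
    have h3 : (X.ringHomComp (starRingEnd ℂ)) 2 = 1 := by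
      rw [h]; exact MulChar.one_apply (by decide)
    rw [MulChar.ringHomComp_apply, hX] at h3
    have := congrArg Complex.re h3
    simp at this
  have d1 := DirichletCharacter.differentiable_LFunction hne
  have d2 := DirichletCharacter.differentiable_LFunction hne2
  unfold dhFunction
  fun_prop

lemma rep (X : DirichletCharacter ℂ 5) (hX : X 2 = Complex.I) (h0 : 0 ≤ dhKappa) (h1 : dhKappa ≤ 0.285)
    (M : ℕ) (hM : 1 ≤ M) (s : ℂ) (hs : s ∈ UU) :
    dhFunction X s = ∑ n ∈ Finset.range (5 * M), cc dhKappa n * (n : ℂ) ^ (-s) + TT dhKappa s ((5 * M : ℕ) : ℝ)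
      + ∑' i : ℕ, Eb dhKappa s ((5 * (M + i) : ℕ) : ℝ) := by
  have hpos : ∀ i : ℕ, (0 : ℝ) < ((5 * (M + i) : ℕ) : ℝ) := fun i => by exact_mod_cast (by omega)
  have hopen1 : IsOpen {s : ℂ | 0 < s.re} := isOpen_lt continuous_const Complex.continuous_re
  have hopen : IsOpen UU := hopen1.inter Metric.isOpen_ball
  have hconv : Convex ℝ UU := (convex_halfSpace_re_gt 0).inter (convex_ball 0 100)
  have hd : DifferentiableOn ℂ (fun s => ∑ n ∈ Finset.range (5 * M), cc dhKappa n * (n : ℂ) ^ (-s)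
      + TT dhKappa s ((5 * M : ℕ) : ℝ) + ∑' i : ℕ, Eb dhKappa s ((5 * (M + i) : ℕ) : ℝ)) UU := by
    have q1 := (diff_sum dhKappa (5 * M)).differentiableOn (s := UU)
    have q2 := (diff_TT dhKappa ((5 * M : ℕ) : ℝ) (hpos 0)).differentiableOn (s := UU)
    have q3 := Complex.differentiableOn_tsum_of_summable_norm ((summable_inv5 M).mul_left (36 * 104 ^ 5))
      (F := fun i s => Eb dhKappa s ((5 * (M + i) : ℕ) : ℝ))
      (fun i => (diff_Eb dhKappa _ (hpos i)).differentiableOn) hopen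
      (fun i w hw => Eb_bound_UU _ h0 h1 M i hM w hw)
    exact (q1.add q2).add q3
  have h2 : (2 : ℂ) ∈ UU := by
    constructor
    · simp
    · simp; norm_num
  have heq := AnalyticOnNhd.eqOn_of_preconnected_of_eventuallyEq
    ((diff_dh X hX).differentiableOn.analyticOnNhd hopen) (hd.analyticOnNhd hopen) hconv.isPreconnected h2 (by
      have o2 : IsOpen {s : ℂ | 1 < s.re} := isOpen_lt continuous_const Complex.continuous_re
      filter_upwards [hopen.mem_nhds h2, o2.mem_nhds (by simp : (2 : ℂ) ∈ {s : ℂ | 1 < s.re})] with z hz hz1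
      exact rep_one X hX h0 h1 M hM z hz hz1)
  exact heq hs

lemma sum_inv5 (k : ℕ) : ∑ i ∈ Finset.range k, 1 / ((5 * (400 + i) : ℕ) : ℝ) ^ 5 ≤
    1 / 12500 * (1 / (398 * 399 * 400 * 401) - 1 / ((398 + k) * (399 + k) * (400 + k) * (401 + k) : ℝ)) := by
  induction k with
  | zero => simp
  | succ k ih =>
    rw [Finset.sum_range_succ]
    have h : 1 / ((5 * (400 + k) : ℕ) : ℝ) ^ 5 ≤ 1 / 12500 * (1 / ((398 + k) * (399 + k) * (400 + k) * (401 + k) : ℝ)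
        - 1 / ((398 + (k + 1)) * (399 + (k + 1)) * (400 + (k + 1)) * (401 + (k + 1)) : ℝ)) := by
      have hk : (0 : ℝ) ≤ k := by positivity
      have e : 1 / ((398 + k) * (399 + k) * (400 + k) * (401 + k) : ℝ)
        - 1 / ((398 + (k + 1)) * (399 + (k + 1)) * (400 + (k + 1)) * (401 + (k + 1)) : ℝ)
        = 4 / ((398 + k) * (399 + k) * (400 + k) * (401 + k) * (402 + k) : ℝ) := by
        have : (398 + (k + 1) : ℝ) = 399 + k := by ring
        rw [this]
        have : (399 + (k + 1) : ℝ) = 400 + k := by ring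
        rw [this]
        have : (400 + (k + 1) : ℝ) = 401 + k := by ring
        rw [this]
        have : (401 + (k + 1) : ℝ) = 402 + k := by ring
        rw [this]
        field_simp
        ring
      rw [e]
      push_cast
      have e2 : (5 * (400 + (k : ℝ))) ^ 5 = 3125 * (400 + k) ^ 5 := by ring
      rw [e2]
      have e3 : 1 / 12500 * (4 / ((398 + k) * (399 + k) * (400 + k) * (401 + k) * (402 + k) : ℝ))
        = 1 / (3125 * ((398 + k) * (399 + k) * (400 + k) * (401 + k) * (402 + k) : ℝ)) := by
        field_simp; norm_num
      rw [e3]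
      apply one_div_le_one_div_of_le (by positivity)
      have : ((398 + k) * (399 + k) * (400 + k) * (401 + k) * (402 + k) : ℝ)
        = (400 + k) * (((400 + k) ^ 2 - 1) * ((400 + k) ^ 2 - 4)) := by ring
      rw [this]
      have e4 : (3125 * (400 + (k : ℝ)) ^ 5) = 3125 * ((400 + k) * ((400 + k) ^ 2 * (400 + k) ^ 2)) := by ring
      rw [e4]
      have hsq : (4 : ℝ) ≤ (400 + (k : ℝ)) ^ 2 := by nlinarith
      gcongr
      · linarith
      · linarith
    push_cast at *
    linarith

lemma tail_bound (κ : ℝ) (h0 : 0 ≤ κ) (h1 : κ ≤ 0.285) (s : ℂ) (hs : 0.8 ≤ s.re) (hn : ‖poch s 5‖ ≤ 90 ^ 5) :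
    ‖∑' i : ℕ, Eb κ s ((5 * (400 + i) : ℕ) : ℝ)‖ ≤ 0.0000016 := by
  have hb : ∀ i : ℕ, ‖Eb κ s ((5 * (400 + i) : ℕ) : ℝ)‖ ≤ 36 * 90 ^ 5 / 430 * (1 / ((5 * (400 + i) : ℕ) : ℝ) ^ 5) := by
    intro i
    have hy : (2000 : ℝ) ≤ ((5 * (400 + i) : ℕ) : ℝ) := by exact_mod_cast (by omega)
    set y := ((5 * (400 + i) : ℕ) : ℝ)
    refine (Eb_bound κ h0 h1 s y (by linarith) (by linarith)).trans ?_
    have e : y ^ (-(s.re + 5)) = y ^ (-s.re) * (1 / y ^ 5) := by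
      rw [neg_add, Real.rpow_add (by linarith), Real.rpow_neg (by linarith) 5, one_div]
      congr 2
      exact_mod_cast Real.rpow_natCast y 5
    have h3 : y ^ (-s.re) ≤ 1 / 430 := by
      calc y ^ (-s.re) ≤ y ^ (-(0.8 : ℝ)) := Real.rpow_le_rpow_of_exponent_le (by linarith) (by linarith)
        _ ≤ 2000 ^ (-(0.8 : ℝ)) := Real.rpow_le_rpow_of_nonpos (by norm_num) hy (by norm_num)
        _ ≤ 1 / 430 := by
          rw [Real.rpow_neg (by norm_num), ← one_div]
          apply one_div_le_one_div_of_le (by norm_num)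
          have : (430 : ℝ) = ((430 : ℝ) ^ (5 : ℕ)) ^ ((1 : ℝ) / 5) := by
            rw [← Real.rpow_natCast, ← Real.rpow_mul (by norm_num)]; norm_num
          rw [this]
          have : (2000 : ℝ) ^ (0.8 : ℝ) = ((2000 : ℝ) ^ (4 : ℕ)) ^ ((1 : ℝ) / 5) := by
            rw [← Real.rpow_natCast, ← Real.rpow_mul (by norm_num)]; norm_num
          rw [this]
          apply Real.rpow_le_rpow <;> norm_num
    rw [e]
    calc 36 * ‖poch s 5‖ * (y ^ (-s.re) * (1 / y ^ 5)) ≤ 36 * 90 ^ 5 * (1 / 430 * (1 / y ^ 5)) := by gcongr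
      _ = _ := by ring
  have hsm := (summable_inv5 400).mul_left (36 * 90 ^ 5 / 430)
  refine (tsum_of_norm_bounded hsm.hasSum hb).trans ?_
  rw [tsum_mul_left]
  have : ∑' i : ℕ, 1 / ((5 * (400 + i) : ℕ) : ℝ) ^ 5 ≤ 1 / 12500 * (1 / (398 * 399 * 400 * 401)) := by
    apply Real.tsum_le_of_sum_range_le
    · intro i; positivity
    · intro k
      refine (sum_inv5 k).trans ?_
      have : 0 ≤ 1 / ((398 + k) * (399 + k) * (400 + k) * (401 + k) : ℝ) := by positivity
      linarith
  calc _ ≤ 36 * 90 ^ 5 / 430 * (1 / 12500 * (1 / (398 * 399 * 400 * 401))) := by gcongr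
    _ ≤ (0.0000016 : ℝ) := by norm_num


/-! ### Numerical conclusions -/

lemma kappa_bounds : |dhKappa - 0.28407904| ≤ 0.0000001 := by
  have h5 : Real.sqrt 5 ^ 2 = 5 := Real.sq_sqrt (by norm_num)
  have ha : 2.236067977 ≤ Real.sqrt 5 := Real.le_sqrt_of_sq_le (by norm_num)
  have hb : Real.sqrt 5 ≤ 2.236067978 := Real.sqrt_le_iff.mpr ⟨by norm_num, by norm_num⟩
  have hc : 2.351141008 ≤ Real.sqrt (10 - 2 * Real.sqrt 5) :=
    Real.le_sqrt_of_sq_le (by norm_num; linarith)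
  have hd : Real.sqrt (10 - 2 * Real.sqrt 5) ≤ 2.351141010 :=
    Real.sqrt_le_iff.mpr ⟨by norm_num, by norm_num; linarith⟩
  have hpos : 0 < Real.sqrt 5 - 1 := by linarith
  rw [abs_le]
  unfold dhKappa
  constructor
  · have : 0.28407904 - 0.0000001 ≤ (Real.sqrt (10 - 2 * Real.sqrt 5) - 2) / (Real.sqrt 5 - 1) := by
      rw [le_div_iff₀ hpos]
      linarith
    linarith
  · have : (Real.sqrt (10 - 2 * Real.sqrt 5) - 2) / (Real.sqrt 5 - 1) ≤ 0.28407904 + 0.0000001 := by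
      rw [div_le_iff₀ hpos]
      linarith
    linarith

lemma kappa_nonneg : 0 ≤ dhKappa := by
  have := (abs_le.mp kappa_bounds).1
  norm_num at *
  linarith

lemma kappa_le : dhKappa ≤ 0.285 := by
  have := (abs_le.mp kappa_bounds).2
  norm_num at *
  linarith

lemma B.mem_norm {b : B} {x : ℂ} (h : b.mem x) :
    ‖x - ((b.re : ℂ) + (b.im : ℂ) * Complex.I) / (S : ℂ)‖ ≤ (b.rad : ℝ) / S := by
  have hS : (0 : ℝ) < (S : ℝ) := S_pos
  have hS' : (S : ℂ) ≠ 0 := by exact_mod_cast hS.ne'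
  have e : x - ((b.re : ℂ) + (b.im : ℂ) * Complex.I) / (S : ℂ)
      = ((S : ℂ) * x - ((b.re : ℂ) + (b.im : ℂ) * Complex.I)) / (S : ℂ) := by
    field_simp
  rw [e, norm_div, Complex.norm_natCast]
  exact div_le_div_of_nonneg_right h hS.le

lemma norm_le_of_sq (z : ℂ) (b : ℝ) (hb : 0 ≤ b) (h : z.re ^ 2 + z.im ^ 2 ≤ b ^ 2) : ‖z‖ ≤ b := by
  rw [Complex.norm_def, Real.sqrt_le_left hb, Complex.normSq_apply]
  nlinarith

lemma cc_split (κ : ℝ) (N : ℕ) (g : ℕ → ℂ) : ∑ n ∈ Finset.range N, cc κ n * g n =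
    ∑ n ∈ Finset.range N, e1 n * g n + κ * ∑ n ∈ Finset.range N, e2 n * g n := by
  rw [Finset.mul_sum, ← Finset.sum_add_distrib]
  apply Finset.sum_congr rfl
  intro n _
  unfold cc
  ring

noncomputable def QQ (κ : ℝ) (s : ℂ) : ℂ := (3 + (κ : ℂ)) / 5 - (2 + (κ : ℂ)) / 5 * (s * (s + 1)) / 4000000

lemma TT_eq (κ : ℝ) (s : ℂ) : TT κ s ((2000 : ℕ) : ℝ) = ((2000 : ℕ) : ℂ) ^ (-s) * QQ κ s := by
  unfold TT QQ
  have e : (((2000 : ℕ) : ℝ) : ℂ) ^ (-(s + 2)) = ((2000 : ℕ) : ℂ) ^ (-s) / 4000000 := by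
    rw [neg_add, Complex.ofReal_natCast, Complex.cpow_add _ _ (by norm_num), Complex.cpow_neg _ 2]
    have : ((2000 : ℕ) : ℂ) ^ (2 : ℂ) = 4000000 := by
      rw [show (2 : ℂ) = ((2 : ℕ) : ℂ) by norm_num, Complex.cpow_natCast]
      norm_num
    rw [this]
    ring
  rw [e, Complex.ofReal_natCast]
  ring

lemma QQ_bound (κ : ℝ) (h0 : 0 ≤ κ) (h1 : κ ≤ 0.285) (s : ℂ) (hs : ‖s‖ ≤ 87) : ‖QQ κ s‖ ≤ 1 := by
  unfold QQ
  have ha : ‖(3 + (κ : ℂ)) / 5‖ ≤ 0.66 := by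
    rw [show (3 + (κ : ℂ)) / 5 = (((3 + κ) / 5 : ℝ) : ℂ) by push_cast; ring, Complex.norm_real,
      Real.norm_of_nonneg (by positivity)]
    norm_num at h1 ⊢
    linarith
  have hb : ‖(2 + (κ : ℂ)) / 5‖ ≤ 1 := by
    rw [show (2 + (κ : ℂ)) / 5 = (((2 + κ) / 5 : ℝ) : ℂ) by push_cast; ring, Complex.norm_real,
      Real.norm_of_nonneg (by positivity)]
    norm_num at h1 ⊢
    linarith
  have hs1 : ‖s + 1‖ ≤ 88 := (norm_add_le _ _).trans (by rw [norm_one]; linarith)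
  have hc : ‖(2 + (κ : ℂ)) / 5 * (s * (s + 1)) / 4000000‖ ≤ 1 * (87 * 88) / 4000000 := by
    rw [norm_div, norm_mul, norm_mul, show ‖(4000000 : ℂ)‖ = 4000000 by norm_num]
    gcongr
  refine (norm_sub_le _ _).trans ((add_le_add ha hc).trans ?_)
  norm_num

lemma QQ_diff (κ : ℝ) (h0 : 0 ≤ κ) (h1 : κ ≤ 0.285) (s t : ℂ) (hs : ‖s‖ ≤ 87) (ht : ‖t‖ ≤ 87) :
    ‖QQ κ s - QQ κ t‖ ≤ ‖s - t‖ := by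
  unfold QQ
  have hb : ‖(2 + (κ : ℂ)) / 5‖ ≤ 1 := by
    rw [show (2 + (κ : ℂ)) / 5 = (((2 + κ) / 5 : ℝ) : ℂ) by push_cast; ring, Complex.norm_real,
      Real.norm_of_nonneg (by positivity)]
    norm_num at h1 ⊢
    linarith
  have e : (3 + (κ : ℂ)) / 5 - (2 + (κ : ℂ)) / 5 * (s * (s + 1)) / 4000000
     - ((3 + (κ : ℂ)) / 5 - (2 + (κ : ℂ)) / 5 * (t * (t + 1)) / 4000000)
     = - ((2 + (κ : ℂ)) / 5 * (s + t + 1) / 4000000 * (s - t)) := by ring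
  rw [e, norm_neg, norm_mul, norm_div, norm_mul, show ‖(4000000 : ℂ)‖ = 4000000 by norm_num]
  have h3 : ‖s + t + 1‖ ≤ 87 + 87 + 1 := by
    refine (norm_add_le _ _).trans ?_
    have := norm_add_le s t
    rw [norm_one]; linarith
  calc ‖(2 + (κ : ℂ)) / 5‖ * ‖s + t + 1‖ / 4000000 * ‖s - t‖ ≤ 1 * (87 + 87 + 1) / 4000000 * ‖s - t‖ := by gcongr
    _ ≤ 1 * ‖s - t‖ := by gcongr; norm_num
    _ = _ := one_mul _

noncomputable def GG (s : ℂ) : ℂ :=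
  ∑ n ∈ Finset.range 2000, cc dhKappa n * (n : ℂ) ^ (-s) + TT dhKappa s ((2000 : ℕ) : ℝ)

noncomputable def DD : ℂ := ∑ n ∈ Finset.range 2000, cc dhKappa n * ((n : ℂ) ^ (-s0) * (Real.log n : ℂ))

lemma DD_norm : 1.2 ≤ ‖DD‖ := by
  unfold DD
  rw [cc_split dhKappa 2000 (fun n => (n : ℂ) ^ (-s0) * (Real.log n : ℂ))]
  have g1 := B.mem_norm st21_good.D1
  have g2 := B.mem_norm st21_good.D2
  simp only [st21] at g1 g2
  set x := ∑ m ∈ Finset.range 2000, e1 m * ((m : ℂ) ^ (-s0) * (Real.log m : ℂ))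
  set y := ∑ m ∈ Finset.range 2000, e2 m * ((m : ℂ) ^ (-s0) * (Real.log m : ℂ))
  have a1 := (abs_le.mp ((Complex.abs_re_le_norm _).trans g1)).2
  have a2 := (abs_le.mp ((Complex.abs_re_le_norm _).trans g2)).2
  have k0 := kappa_nonneg
  have k1 := kappa_le
  simp only [S, Complex.sub_re, Complex.div_natCast_re, Complex.add_re, Complex.mul_re, Complex.I_re, Complex.I_im,
    Complex.intCast_re, Complex.intCast_im] at a1 a2
  norm_num at a1 a2 k1
  have hre : ((x + dhKappa * y).re) = x.re + dhKappa * y.re := by simp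
  have h : (x + dhKappa * y).re ≤ -1.2 := by
    rw [hre]
    have hy : y.re ≤ 0.42 := by norm_num; linarith
    have : dhKappa * y.re ≤ dhKappa * 0.42 := by gcongr
    norm_num at this ⊢
    linarith
  have := (abs_le.mp (Complex.abs_re_le_norm (x + dhKappa * y))).1
  linarith

lemma GG_norm : ‖GG s0‖ ≤ 0.000001 := by
  unfold GG
  rw [cc_split dhKappa 2000 (fun n => (n : ℂ) ^ (-s0)), TT_eq]
  have g1 := B.mem_norm st21_good.F1
  have g2 := B.mem_norm st21_good.F2
  have g3 := B.mem_norm st21_good.v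
  simp only [st21] at g1 g2 g3
  set x := ∑ m ∈ Finset.range 2000, e1 m * (m : ℂ) ^ (-s0)
  set y := ∑ m ∈ Finset.range 2000, e2 m * (m : ℂ) ^ (-s0)
  set v := ((2000 : ℕ) : ℂ) ^ (-s0)
  have k0 := kappa_nonneg
  have k1 := kappa_le
  have kb := kappa_bounds
  set κ := dhKappa
  have hq : ‖QQ κ s0‖ ≤ 1 := QQ_bound κ k0 k1 s0 (s0_norm.trans (by norm_num))
  set xc : ℂ := (((187617008490518238 : ℤ) : ℂ) + ((41835591227349887 : ℤ) : ℂ) * Complex.I) / (S : ℂ) with hxc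
  set yc : ℂ := (((-658112957578446291 : ℤ) : ℂ) + ((-151649743890444563 : ℤ) : ℂ) * Complex.I) / (S : ℂ) with hyc
  set vc : ℂ := (((-1005020899442965 : ℤ) : ℂ) + ((1892932456983010 : ℤ) : ℂ) * Complex.I) / (S : ℂ) with hvc
  have hqd : ‖QQ κ s0 - QQ 0.28407904 s0‖ ≤ 0.0000001 := by
    have e : QQ κ s0 - QQ 0.28407904 s0
        = ((κ - 0.28407904 : ℝ) : ℂ) * (1 / 5 - 1 / 5 * (s0 * (s0 + 1)) / 4000000) := by
      unfold QQ; push_cast; ring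
    rw [e, norm_mul, Complex.norm_real, Real.norm_eq_abs]
    have hs1 : ‖s0 + 1‖ ≤ 87 := (norm_add_le _ _).trans (by rw [norm_one]; linarith [s0_norm])
    have h3 : ‖(1 / 5 - 1 / 5 * (s0 * (s0 + 1)) / 4000000 : ℂ)‖ ≤ 1 := by
      refine (norm_sub_le _ _).trans ?_
      have : ‖1 / 5 * (s0 * (s0 + 1)) / 4000000‖ ≤ 1 / 5 * (86 * 87) / 4000000 := by
        rw [norm_div, norm_mul, norm_mul, show ‖(4000000 : ℂ)‖ = 4000000 by norm_num,
          show ‖(1 / 5 : ℂ)‖ = 1 / 5 by norm_num]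
        have := s0_norm
        gcongr
      rw [show ‖(1 / 5 : ℂ)‖ = 1 / 5 by norm_num]
      refine (add_le_add_right this _).trans ?_
      norm_num
    calc _ ≤ (0.0000001 : ℝ) * 1 := by gcongr
      _ = _ := mul_one _
  have hyn : ‖yc‖ ≤ 1 := by
    apply norm_le_of_sq _ _ (by norm_num)
    rw [hyc]
    simp only [S, Complex.div_natCast_re, Complex.div_natCast_im, Complex.add_re, Complex.add_im, Complex.mul_re,
      Complex.mul_im, Complex.I_re, Complex.I_im, Complex.intCast_re, Complex.intCast_im]
    norm_num
  have hvn : ‖vc‖ ≤ 1 := by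
    apply norm_le_of_sq _ _ (by norm_num)
    rw [hvc]
    simp only [S, Complex.div_natCast_re, Complex.div_natCast_im, Complex.add_re, Complex.add_im, Complex.mul_re,
      Complex.mul_im, Complex.I_re, Complex.I_im, Complex.intCast_re, Complex.intCast_im]
    norm_num
  have hG : ‖xc + (0.28407904 : ℝ) * yc + vc * QQ 0.28407904 s0‖ ≤ 0.0000005 := by
    apply norm_le_of_sq _ _ (by norm_num)
    have eq0 : QQ 0.28407904 s0 = ⟨(3.28407904 / 5 - 2.28407904 / 5
        * (0.8085171825 * 1.8085171825 - 85.6993484854 * 85.6993484854) / 4000000),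
        - (2.28407904 / 5 * (0.8085171825 * 85.6993484854 + 85.6993484854 * 1.8085171825) / 4000000)⟩ := by
      have es : (s0 * (s0 + 1)) = ⟨0.8085171825 * 1.8085171825 - 85.6993484854 * 85.6993484854,
         0.8085171825 * 85.6993484854 + 85.6993484854 * 1.8085171825⟩ := by
        apply Complex.ext <;> simp [s0] <;> norm_num
      unfold QQ
      rw [es]
      have t1 : (3 + ((0.28407904 : ℝ) : ℂ)) / 5 = ((3.28407904 / 5 : ℝ) : ℂ) := by push_cast; norm_num
      have t2 : ∀ w : ℂ, (2 + ((0.28407904 : ℝ) : ℂ)) / 5 * w / 4000000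
          = ((2.28407904 / 5 / 4000000 : ℝ) : ℂ) * w := by
        intro w; push_cast; ring
      rw [t1, t2]
      apply Complex.ext
      · rw [Complex.sub_re, Complex.re_ofReal_mul, Complex.ofReal_re]; norm_num
      · rw [Complex.sub_im, Complex.im_ofReal_mul, Complex.ofReal_im]; norm_num
    rw [eq0, hxc, hyc, hvc]
    simp only [S, Complex.div_natCast_re, Complex.div_natCast_im, Complex.add_re, Complex.add_im, Complex.mul_re,
      Complex.mul_im, Complex.I_re, Complex.I_im, Complex.intCast_re, Complex.intCast_im, Complex.ofReal_re,
      Complex.ofReal_im]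
    norm_num
  have e : x + κ * y + v * QQ κ s0 = (x - xc) + κ * (y - yc) + ((κ - 0.28407904 : ℝ) : ℂ) * yc
      + (v - vc) * QQ κ s0 + vc * (QQ κ s0 - QQ 0.28407904 s0)
      + (xc + (0.28407904 : ℝ) * yc + vc * QQ 0.28407904 s0) := by
    push_cast; ring
  rw [e]
  have n2 : ‖(κ : ℂ) * (y - yc)‖ ≤ 0.285 * ((155493621 : ℕ) / (S : ℝ)) := by
    rw [norm_mul, Complex.norm_real, Real.norm_of_nonneg k0]
    gcongr
  have n3 : ‖((κ - 0.28407904 : ℝ) : ℂ) * yc‖ ≤ 0.0000001 * 1 := by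
    rw [norm_mul, Complex.norm_real, Real.norm_eq_abs]
    gcongr
  have n4 : ‖(v - vc) * QQ κ s0‖ ≤ (274759 : ℕ) / (S : ℝ) * 1 := by
    rw [norm_mul]
    gcongr
  have n5 : ‖vc * (QQ κ s0 - QQ 0.28407904 s0)‖ ≤ 1 * 0.0000001 := by
    rw [norm_mul]
    gcongr
  refine (norm_add_le _ _).trans ((add_le_add ((norm_add_le _ _).trans (add_le_add ((norm_add_le _ _).trans
    (add_le_add ((norm_add_le _ _).trans (add_le_add ((norm_add_le _ _).trans (add_le_add g1 n2)) n3)) n4)) n5)) hG).trans ?_)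
  norm_num [S]

lemma pow_shift (n : ℕ) (hn : 1 ≤ n) (z : ℂ) :
    (n : ℂ) ^ (-z) = (n : ℂ) ^ (-s0) * Complex.exp (-(z - s0) * (Real.log n : ℂ)) := by
  have hn0 : (n : ℂ) ≠ 0 := by exact_mod_cast (by omega : n ≠ 0)
  rw [show -z = -s0 + (-(z - s0)) by ring, Complex.cpow_add _ _ hn0]
  congr 1
  rw [Complex.cpow_def_of_ne_zero hn0, Complex.natCast_log]
  congr 1
  ring

lemma log_le_eight (n : ℕ) (h : n ≤ 2000) : Real.log n ≤ 8 := by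
  rcases Nat.eq_zero_or_pos n with h0 | h0
  · subst h0; simp
  · rw [Real.log_le_iff_le_exp (by exact_mod_cast h0)]
    have h1 : (n : ℝ) ≤ 2000 := by exact_mod_cast h
    have h2 : (2000 : ℝ) ≤ 2.7 ^ 8 := by norm_num
    have h3 : (2.7 : ℝ) ^ 8 ≤ Real.exp 1 ^ 8 := by
      have := Real.exp_one_gt_d9
      gcongr
      linarith
    have h4 : Real.exp 1 ^ 8 = Real.exp 8 := by
      rw [← Real.exp_nat_mul]; norm_num
    linarith

lemma norm_pow_s0 (n : ℕ) : ‖(n : ℂ) ^ (-s0)‖ ≤ 1 / Real.sqrt n := by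
  rcases Nat.eq_zero_or_pos n with h0 | h0
  · subst h0
    rw [Nat.cast_zero, Complex.zero_cpow]
    · simp
    · intro h
      have := congrArg Complex.re h
      norm_num [s0] at this
  · rw [Complex.norm_natCast_cpow_of_pos h0, one_div, Real.sqrt_eq_rpow, ← Real.rpow_neg (by positivity)]
    apply Real.rpow_le_rpow_of_exponent_le (by exact_mod_cast h0)
    simp [s0]; norm_num

lemma sum_sqrt_aux (N : ℕ) : ∑ n ∈ Finset.range (N + 1), 1 / Real.sqrt n ≤ 2 * Real.sqrt N := by
  induction N with
  | zero => simp
  | succ N ih =>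
    rw [Finset.sum_range_succ]
    have hN : (0 : ℝ) ≤ N := by positivity
    have ha : Real.sqrt N ^ 2 = N := Real.sq_sqrt hN
    have hb : Real.sqrt ((N + 1 : ℕ) : ℝ) ^ 2 = ((N + 1 : ℕ) : ℝ) := Real.sq_sqrt (by positivity)
    have hb0 : 0 < Real.sqrt ((N + 1 : ℕ) : ℝ) := Real.sqrt_pos.mpr (by positivity)
    push_cast at hb hb0 ⊢
    generalize Real.sqrt (N : ℝ) = a at *
    generalize Real.sqrt ((N : ℝ) + 1) = b at *
    have h : 1 / b ≤ 2 * (b - a) := by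
      rw [div_le_iff₀ hb0]
      nlinarith [sq_nonneg (a - b)]
    linarith

lemma sum_sqrt : ∑ n ∈ Finset.range 2000, 1 / Real.sqrt (n : ℝ) ≤ 90 := by
  have h := sum_sqrt_aux 1999
  have h45 : Real.sqrt ((1999 : ℕ) : ℝ) ≤ 45 := Real.sqrt_le_iff.mpr ⟨by norm_num, by norm_num⟩
  exact h.trans (by linarith)

lemma cc_norm (κ : ℝ) (h0 : 0 ≤ κ) (h1 : κ ≤ 0.285) (n : ℕ) : ‖cc κ n‖ ≤ 1 := by
  unfold cc e1 e2
  have : |κ| ≤ 1 := by rw [abs_of_nonneg h0]; norm_num at h1; linarith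
  split_ifs <;> first | omega | (simp [this])

lemma GG_diff (z : ℂ) (hz : ‖z - s0‖ = 0.000015) : ‖GG z - GG s0 + (z - s0) * DD‖ ≤ 0.000002 := by
  have k0 := kappa_nonneg
  have k1 := kappa_le
  have hzn : ‖z‖ ≤ 87 := by
    have : z = (z - s0) + s0 := by ring
    rw [this]
    refine (norm_add_le _ _).trans ?_
    rw [hz]
    have := s0_norm
    norm_num
    linarith
  have hw : ∀ n : ℕ, n ≤ 2000 → ‖-(z - s0) * (Real.log n : ℂ)‖ ≤ 0.000015 * 8 := by
    intro n hn
    rw [norm_mul, norm_neg, hz, Complex.norm_real, Real.norm_of_nonneg (Real.log_natCast_nonneg n)]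
    have := log_le_eight n hn
    gcongr
  have hterm : ∀ n ∈ Finset.range 2000, ‖cc dhKappa n * ((n : ℂ) ^ (-z) - (n : ℂ) ^ (-s0)
      + (z - s0) * ((n : ℂ) ^ (-s0) * (Real.log n : ℂ)))‖ ≤ (0.000015 * 8) ^ 2 * (1 / Real.sqrt n) := by
    intro n hn
    have hn2 : n ≤ 2000 := (Finset.mem_range.mp hn).le
    rcases Nat.eq_zero_or_pos n with h0 | h0
    · subst h0; simp [cc, e1, e2]
    · have e : (n : ℂ) ^ (-z) - (n : ℂ) ^ (-s0) + (z - s0) * ((n : ℂ) ^ (-s0) * (Real.log n : ℂ))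
          = (Complex.exp (-(z - s0) * (Real.log n : ℂ)) - 1 - (-(z - s0) * (Real.log n : ℂ))) * (n : ℂ) ^ (-s0) := by
        rw [pow_shift n h0 z]; ring
      rw [e, norm_mul, norm_mul]
      have w1 := hw n hn2
      have w2 := Complex.norm_exp_sub_one_sub_id_le (x := -(z - s0) * (Real.log n : ℂ)) (w1.trans (by norm_num))
      have w3 := cc_norm dhKappa k0 k1 n
      have w4 := norm_pow_s0 n
      calc _ ≤ 1 * (‖-(z - s0) * (Real.log n : ℂ)‖ ^ 2 * (1 / Real.sqrt n)) := by gcongr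
        _ ≤ 1 * ((0.000015 * 8) ^ 2 * (1 / Real.sqrt n)) := by gcongr
        _ = _ := one_mul _
  have hsum := norm_sum_le_of_le _ hterm
  rw [← Finset.mul_sum] at hsum
  have hT : ‖TT dhKappa z ((2000 : ℕ) : ℝ) - TT dhKappa s0 ((2000 : ℕ) : ℝ)‖ ≤ 0.0000006 := by
    rw [TT_eq, TT_eq, pow_shift 2000 (by norm_num) z]
    have g3 := B.mem_norm st21_good.v
    simp only [st21] at g3
    set v := ((2000 : ℕ) : ℂ) ^ (-s0)
    set w := -(z - s0) * (Real.log ((2000 : ℕ) : ℝ) : ℂ)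
    have hwn : ‖w‖ ≤ 0.000015 * 8 := hw 2000 le_rfl
    have hv : ‖v‖ ≤ 0.0022 := by
      set vc : ℂ := (((-1005020899442965 : ℤ) : ℂ) + ((1892932456983010 : ℤ) : ℂ) * Complex.I) / (S : ℂ) with hvc
      have hvn : ‖vc‖ ≤ 0.00215 := by
        apply norm_le_of_sq _ _ (by norm_num)
        rw [hvc]
        simp only [S, Complex.div_natCast_re, Complex.div_natCast_im, Complex.add_re, Complex.add_im, Complex.mul_re,
          Complex.mul_im, Complex.I_re, Complex.I_im, Complex.intCast_re, Complex.intCast_im]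
        norm_num
      have : v = (v - vc) + vc := by ring
      rw [this]
      refine (norm_add_le _ _).trans ((add_le_add g3 hvn).trans ?_)
      norm_num [S]
    have e : v * Complex.exp w * QQ dhKappa z - v * QQ dhKappa s0
        = v * ((Complex.exp w - 1) * QQ dhKappa z + (QQ dhKappa z - QQ dhKappa s0)) := by ring
    have q1 := QQ_bound dhKappa k0 k1 z hzn
    have q2 := QQ_diff dhKappa k0 k1 z s0 hzn (s0_norm.trans (by norm_num))
    rw [hz] at q2
    have q3 := Complex.norm_exp_sub_one_le (x := w) (hwn.trans (by norm_num))
    rw [e, norm_mul]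
    have q4 : ‖(Complex.exp w - 1) * QQ dhKappa z + (QQ dhKappa z - QQ dhKappa s0)‖ ≤ 2 * (0.000015 * 8) * 1 + 0.000015 := by
      refine (norm_add_le _ _).trans (add_le_add ?_ q2)
      rw [norm_mul]
      have : ‖Complex.exp w - 1‖ ≤ 2 * (0.000015 * 8) := q3.trans (by gcongr)
      gcongr
    calc _ ≤ (0.0022 : ℝ) * (2 * (0.000015 * 8) * 1 + 0.000015) := by gcongr
      _ ≤ _ := by norm_num
  have e : GG z - GG s0 + (z - s0) * DD = ∑ n ∈ Finset.range 2000, cc dhKappa n * ((n : ℂ) ^ (-z) - (n : ℂ) ^ (-s0)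
      + (z - s0) * ((n : ℂ) ^ (-s0) * (Real.log n : ℂ)))
      + (TT dhKappa z ((2000 : ℕ) : ℝ) - TT dhKappa s0 ((2000 : ℕ) : ℝ)) := by
    unfold GG DD
    simp only [mul_add, mul_sub, Finset.sum_add_distrib, Finset.sum_sub_distrib, Finset.mul_sum]
    have : ∀ n : ℕ, cc dhKappa n * ((z - s0) * ((n : ℂ) ^ (-s0) * (Real.log n : ℂ)))
      = (z - s0) * (cc dhKappa n * ((n : ℂ) ^ (-s0) * (Real.log n : ℂ))) := by intro n; ring
    simp only [this]
    ring
  rw [e]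
  refine (norm_add_le _ _).trans ((add_le_add hsum hT).trans ?_)
  have := sum_sqrt
  calc _ ≤ (0.000015 * 8) ^ 2 * (90 : ℝ) + 0.0000006 := by gcongr
    _ ≤ _ := by norm_num

lemma s0_norm_sharp : ‖s0‖ ≤ 85.9 := by
  apply norm_le_of_sq _ _ (by norm_num)
  simp [s0]
  norm_num

lemma near (X : DirichletCharacter ℂ 5) (hX : X 2 = Complex.I) (z : ℂ) (hz : ‖z - s0‖ ≤ 0.000015) :
    ‖dhFunction X z - GG z‖ ≤ 0.0000016 := by
  have k0 := kappa_nonneg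
  have k1 := kappa_le
  have hzn : ‖z‖ ≤ 85.9 + 0.000015 := by
    have : z = s0 + (z - s0) := by ring
    rw [this]
    exact (norm_add_le _ _).trans (add_le_add s0_norm_sharp hz)
  have hre : 0.8 ≤ z.re := by
    have := (abs_le.mp ((Complex.abs_re_le_norm _).trans hz)).1
    simp [s0] at this
    norm_num at this ⊢
    linarith
  have hU : z ∈ UU := by
    constructor
    · show 0 < z.re
      norm_num at hre; linarith
    · rw [mem_ball_zero_iff]
      norm_num at hzn
      linarith
  have hr := rep X hX k0 k1 400 (by norm_num) z hU
  rw [hr]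
  have e : ∑ n ∈ Finset.range (5 * 400), cc dhKappa n * (n : ℂ) ^ (-z) + TT dhKappa z ((5 * 400 : ℕ) : ℝ)
      + ∑' i : ℕ, Eb dhKappa z ((5 * (400 + i) : ℕ) : ℝ) - GG z = ∑' i : ℕ, Eb dhKappa z ((5 * (400 + i) : ℕ) : ℝ) := by
    unfold GG
    norm_num
  rw [e]
  refine tail_bound dhKappa k0 k1 z hre (poch_bound z 90 ?_)
  norm_num at hzn
  linarith

lemma exists_zero (X : DirichletCharacter ℂ 5) (hX : X 2 = Complex.I) :
    ∃ z, ‖z - s0‖ ≤ 0.000015 ∧ dhFunction X z = 0 := by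
  have hdiff := diff_dh X hX
  have h0 := near X hX s0 (by rw [sub_self, norm_zero]; norm_num)
  have hf : ∀ z ∈ Metric.sphere s0 0.000015, (0.000012 : ℝ) ≤ ‖dhFunction X z - dhFunction X s0‖ := by
    intro z hz
    have hz' : ‖z - s0‖ = 0.000015 := by rwa [mem_sphere_iff_norm] at hz
    have h1 := near X hX z hz'.le
    have h2 := GG_diff z hz'
    have h3 : 0.000015 * 1.2 ≤ ‖(z - s0) * DD‖ := by
      rw [norm_mul, hz']
      have := DD_norm
      gcongr
    have e : (z - s0) * DD = (GG z - GG s0 + (z - s0) * DD) - (dhFunction X z - dhFunction X s0)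
      + (dhFunction X z - GG z) - (dhFunction X s0 - GG s0) := by ring
    rw [e] at h3
    have := (norm_sub_le _ _).trans (add_le_add_left ((norm_add_le _ _).trans (add_le_add_left (norm_sub_le _ _) _)) _)
      |> h3.trans
    norm_num at *
    linarith
  have hfreq : ∃ᶠ z in nhds s0, dhFunction X z ≠ dhFunction X s0 := by
    intro hn
    simp only [ne_eq, not_not] at hn
    have hA : AnalyticOnNhd ℂ (dhFunction X) Set.univ := hdiff.differentiableOn.analyticOnNhd isOpen_univ
    have := hA.eq_of_eventuallyEq (g := fun _ => dhFunction X s0) analyticOnNhd_const hn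
    have h5 := hf (s0 + (0.000015 : ℝ)) (by
      rw [mem_sphere_iff_norm, add_sub_cancel_left, Complex.norm_real, Real.norm_of_nonneg (by norm_num)])
    rw [this] at h5
    norm_num at h5
  have hmain := (hdiff.diffContOnCl (s := Metric.ball s0 0.000015)).ball_subset_image_closedBall (by norm_num) hf hfreq
  have hmem : (0 : ℂ) ∈ Metric.ball (dhFunction X s0) (0.000012 / 2) := by
    rw [Metric.mem_ball, dist_eq_norm, zero_sub, norm_neg]
    have h6 := GG_norm
    have : dhFunction X s0 = (dhFunction X s0 - GG s0) + GG s0 := by ring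
    rw [this]
    refine lt_of_le_of_lt ((norm_add_le _ _).trans (add_le_add h0 h6)) ?_
    norm_num
  obtain ⟨z, hz, hz0⟩ := hmain hmem
  exact ⟨z, by rwa [mem_closedBall_iff_norm] at hz, hz0⟩

end DH

/-- the Davenport–Heilbronn function has a zero `s` with
`0.8085 < Re s < 0.8086` and `85.6993 < Im s < 85.6994`; in particular it has a zero with
`1/2 < Re s < 1`, so the analogue of the Riemann Hypothesis fails for it. -/
theorem dh_zero_off_critical_line (X : DirichletCharacter ℂ 5) (hX : X 2 = Complex.I) :
    ∃ s : ℂ, dhFunction X s = 0 ∧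
      0.8085 < s.re ∧ s.re < 0.8086 ∧ 85.6993 < s.im ∧ s.im < 85.6994 ∧
      1 / 2 < s.re ∧ s.re < 1 := by
  obtain ⟨z, hz, hz0⟩ := DH.exists_zero X hX
  have hr := abs_le.mp ((Complex.abs_re_le_norm _).trans hz)
  have hi := abs_le.mp ((Complex.abs_im_le_norm _).trans hz)
  obtain ⟨r1, r2⟩ := hr
  obtain ⟨i1, i2⟩ := hi
  simp only [DH.s0, Complex.sub_re, Complex.sub_im] at r1 r2 i1 i2
  norm_num at r1 r2 i1 i2
  refine ⟨z, hz0, ?_, ?_, ?_, ?_, ?_, ?_⟩ <;> norm_num <;> linarith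
end
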